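/- For every n > 1/δ and every γ ∈ Γ there is a ball B_γⁿ centered on the image of γ, of radius 1/n, satisfying H(S ∩ B_γⁿ) ≥ C n μ(B_γⁿ) for some constant C = C(T) depending only on the data of T. -/

import Mathlib

open MeasureTheory Metric Set Filter Topology
open scoped ENNReal NNReal unitInterval

noncomputable section

namespace Duality

/-! ### Rectifiable curves, line integrals and upper gradients

A rectifiable path is encoded by its arclength-type parametrization: a `1`-Lipschitz
map defined on a compact interval `[a, b]`.  The line integral `∫_γ ρ ds` of a
nonnegative Borel function is then the Lebesgue integral of `ρ ∘ γ` over `[a, b]`. -/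

structure UPath (X : Type*) [PseudoMetricSpace X] where
  a : ℝ
  b : ℝ
  hab : a ≤ b
  toFun : ℝ → X
  lip : LipschitzOnWith 1 toFun (Set.Icc a b)

namespace UPath

variable {X : Type*} [PseudoMetricSpace X]

/-- starting point of the path -/
def start (γ : UPath X) : X := γ.toFun γ.a

/-- end point of the path -/
def finish (γ : UPath X) : X := γ.toFun γ.b

/-- The line integral `∫_γ ρ ds`. -/
def integral (γ : UPath X) (ρ : X → ℝ≥0∞) : ℝ≥0∞ :=
  ∫⁻ t in Set.Icc γ.a γ.b, ρ (γ.toFun t)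

/-- The image (trace) `|γ|` of the path. -/
def trace (γ : UPath X) : Set X := γ.toFun '' Set.Icc γ.a γ.b

/-- The length of the path. -/
def length (γ : UPath X) : ℝ≥0∞ := eVariationOn γ.toFun (Set.Icc γ.a γ.b)

/-- The path stays inside the set `W`. -/
def InSet (γ : UPath X) (W : Set X) : Prop := ∀ t ∈ Set.Icc γ.a γ.b, γ.toFun t ∈ W

/-- The reparametrization of a rectifiable path as a `Path` (continuous map from `[0,1]`). -/
def toPath (γ : UPath X) : Path γ.start γ.finish where
  toFun := fun t => γ.toFun (γ.a + (t : ℝ) * (γ.b - γ.a))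
  continuous_toFun := by
    have hmem : ∀ t : unitInterval, γ.a + (t : ℝ) * (γ.b - γ.a) ∈ Set.Icc γ.a γ.b := by
      intro t
      obtain ⟨ht0, ht1⟩ := t.2
      constructor
      · nlinarith [γ.hab]
      · nlinarith [γ.hab]
    exact γ.lip.continuousOn.comp_continuous (by continuity) hmem
  source' := by simp [start]
  target' := by simp [finish]

end UPath

/-- `ρ` is an upper gradient of `u`. -/
def IsUpperGradient {X : Type*} [PseudoMetricSpace X] {Y : Type*} [PseudoEMetricSpace Y]
    (u : X → Y) (ρ : X → ℝ≥0∞) : Prop :=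
  ∀ γ : UPath X, edist (u γ.start) (u γ.finish) ≤ γ.integral ρ

/-- The `p`-modulus of a family of (rectifiable) paths. -/
def pathMod {X : Type*} [PseudoMetricSpace X] [MeasurableSpace X]
    (μ : Measure X) (p : ℝ) (Γ : Set (UPath X)) : ℝ≥0∞ :=
  ⨅ (ρ : X → ℝ≥0∞) (_ : Measurable ρ ∧ ∀ γ ∈ Γ, 1 ≤ γ.integral ρ),
    ∫⁻ x, ρ x ^ p ∂μ

/-- `ρ` is a `p`-weak upper gradient of `u`: the upper gradient inequality may fail
only on a path family of zero `p`-modulus. -/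
def IsWeakUpperGradient {X : Type*} [PseudoMetricSpace X] [MeasurableSpace X]
    {Y : Type*} [PseudoEMetricSpace Y] (μ : Measure X) (p : ℝ)
    (u : X → Y) (ρ : X → ℝ≥0∞) : Prop :=
  pathMod μ p {γ : UPath X | ¬ edist (u γ.start) (u γ.finish) ≤ γ.integral ρ} = 0

/-- `ρ` is a `p`-weak upper gradient of `u` in the subset `U`. -/
def IsWeakUpperGradientOn {X : Type*} [PseudoMetricSpace X] [MeasurableSpace X]
    {Y : Type*} [PseudoEMetricSpace Y] (μ : Measure X) (p : ℝ) (U : Set X)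
    (u : X → Y) (ρ : X → ℝ≥0∞) : Prop :=
  pathMod (μ.restrict U) p
    {γ : UPath X | γ.InSet U ∧ ¬ edist (u γ.start) (u γ.finish) ≤ γ.integral ρ} = 0

/-- `ρ` is the minimal `p`-weak upper gradient of `u`: it is a `p`-integrable `p`-weak
upper gradient which is `μ`-a.e. dominated by every other one. -/
def IsMinimalWeakUpperGradient {X : Type*} [PseudoMetricSpace X] [MeasurableSpace X]
    {Y : Type*} [PseudoEMetricSpace Y] (μ : Measure X) (p : ℝ)
    (u : X → Y) (ρ : X → ℝ≥0∞) : Prop :=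
  Measurable ρ ∧ IsWeakUpperGradient μ p u ρ ∧ (∫⁻ x, ρ x ^ p ∂μ) < ⊤ ∧
    ∀ ρ' : X → ℝ≥0∞, Measurable ρ' → IsWeakUpperGradient μ p u ρ' →
      (∫⁻ x, ρ' x ^ p ∂μ) < ⊤ → ∀ᵐ x ∂μ, ρ x ≤ ρ' x

/-! ### Doubling measures, Poincaré inequalities, Ahlfors regularity -/

/-- `μ` is a doubling (Borel) measure with doubling constant `Cμ`:
`0 < μ(2B) ≤ Cμ · μ(B) < ∞` for every ball `B` of radius `r < diam T`. -/
def IsDoubling {X : Type*} [MetricSpace X] [MeasurableSpace X]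
    (μ : Measure X) (Cμ : ℝ≥0∞) : Prop :=
  ∀ (x : X) (r : ℝ), 0 < r → r < Metric.diam (Set.univ : Set X) →
    0 < μ (ball x (2 * r)) ∧ μ (ball x (2 * r)) ≤ Cμ * μ (ball x r) ∧
      Cμ * μ (ball x r) < ⊤

/-- `(X, d, μ)` supports a weak `1`-Poincaré inequality with constants `CP`, `lP`:
`⨍_B |u - u_B| dμ ≤ CP · diam B · ⨍_{lP·B} ρ dμ` for every locally integrable `u`
and every upper gradient `ρ` of `u`, and balls have positive finite measure. -/
def SupportsPoincare {X : Type*} [MetricSpace X] [MeasurableSpace X]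
    (μ : Measure X) (CP lP : ℝ) : Prop :=
  (∀ (x : X) (r : ℝ), 0 < r → 0 < μ (ball x r) ∧ μ (ball x r) < ⊤) ∧
  ∀ (u : X → ℝ) (ρ : X → ℝ≥0∞), LocallyIntegrable u μ → Measurable ρ →
    IsUpperGradient u ρ → ∀ (x : X) (r : ℝ), 0 < r →
      (∫⁻ y in ball x r, ENNReal.ofReal |u y - ⨍ z in ball x r, u z ∂μ| ∂μ) /
          μ (ball x r) ≤
        ENNReal.ofReal (CP * Metric.diam (ball x r)) *
          ((∫⁻ y in ball x (lP * r), ρ y ∂μ) / μ (ball x (lP * r)))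

/-- `μ` is Ahlfors `q`-regular with constants `0 < aA ≤ AA`. -/
def IsAhlforsRegular {X : Type*} [MetricSpace X] [MeasurableSpace X]
    (μ : Measure X) (q aA AA : ℝ) : Prop :=
  0 < aA ∧ aA ≤ AA ∧
    ∀ (x : X) (r : ℝ), 0 < r → r < Metric.diam (Set.univ : Set X) →
      ENNReal.ofReal (aA * r ^ q) ≤ μ (ball x r) ∧
        μ (ball x r) ≤ ENNReal.ofReal (AA * r ^ q)

/-! ### The circle `ℝ/ℤ`, loops and degree -/

lemma intCast_coe_eq_zero (k : ℤ) : ((k : ℝ) : UnitAddCircle) = 0 :=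
  (AddCircle.coe_eq_zero_iff _).mpr ⟨k, by simp⟩

/-- The standard loop of degree `k` in `ℝ/ℤ` based at `y`: `t ↦ y + [k t]`. -/
def stdLoop (k : ℤ) (y : UnitAddCircle) : Path y y where
  toFun := fun t => y + (((k : ℝ) * (t : ℝ) : ℝ) : UnitAddCircle)
  continuous_toFun := by
    refine continuous_const.add ?_
    exact (AddCircle.continuous_mk' 1).comp (by continuity)
  source' := by simp
  target' := by
    have h1 : ((1 : unitInterval) : ℝ) = 1 := rfl
    have h : (((k : ℝ) * ((1 : unitInterval) : ℝ) : ℝ) : UnitAddCircle) = 0 := by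
      rw [h1, mul_one]; exact intCast_coe_eq_zero k
    simp [h]

/-- Concatenation of `n` copies of a loop. -/
def loopPow {X : Type*} [TopologicalSpace X] {x : X} (γ : Path x x) : ℕ → Path x x
  | 0 => Path.refl x
  | n + 1 => (loopPow γ n).trans γ

/-- A loop `γ` based at `x` has degree 1 (relative to the chosen generator `α₀` based
at `x₀`) if it is loop-homotopic to a conjugate `η * α₀ * η⁻¹` of `α₀`. -/
def IsDegreeOneLoop {T : Type*} [TopologicalSpace T] (x₀ : T) (α₀ : Path x₀ x₀)
    {x : T} (γ : Path x x) : Prop :=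
  ∃ η : Path x x₀, Path.Homotopic γ (η.trans (α₀.trans η.symm))

/-- A map `f : T → ℝ/ℤ` has degree `k`: it pushes every degree-1 loop based at `x`
to a loop which is loop-homotopic to `[f x] + k·β`, `β (t) = [t]`. -/
def HasDegree {T : Type*} [TopologicalSpace T] (x₀ : T) (α₀ : Path x₀ x₀)
    (f : T → UnitAddCircle) (k : ℤ) : Prop :=
  ∃ hf : Continuous f, ∀ (x : T) (γ : Path x x), IsDegreeOneLoop x₀ α₀ γ →
    Path.Homotopic (γ.map hf) (stdLoop k (f x))

/-- The class of `α₀` generates `π₁(T, x₀) ≅ ℤ`. -/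
def IsGenerator {T : Type*} [TopologicalSpace T] (x₀ : T) (α₀ : Path x₀ x₀) : Prop :=
  Function.Bijective fun k : ℤ =>
    (FundamentalGroup.fromPath (X := TopCat.of T) ⟦α₀⟧ : FundamentalGroup (TopCat.of T) x₀) ^ k

/-- `T` is semilocally simply connected. -/
def SemilocallySimplyConnected (T : Type*) [TopologicalSpace T] : Prop :=
  ∀ x : T, ∃ U ∈ 𝓝 x, ∀ γ : Path x x, (∀ t, γ t ∈ U) → Path.Homotopic γ (Path.refl x)

/-- `f` is a Lipschitz map of degree 1. -/
def DegOneLip {T : Type*} [MetricSpace T] (x₀ : T) (α₀ : Path x₀ x₀)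
    (f : T → UnitAddCircle) : Prop :=
  (∃ L : ℝ≥0, LipschitzWith L f) ∧ HasDegree x₀ α₀ f 1

/-! ### Capacity and surface modulus -/

/-- The degree 1 `p`-capacity of `T`, defined through minimal `p`-weak upper gradients:
the infimum of `∫ ρ^p dμ` over `p`-weak upper gradients `ρ` of Lipschitz degree-1 maps. -/
def cap {T : Type*} [MetricSpace T] [MeasurableSpace T] (μ : Measure T) (p : ℝ)
    (x₀ : T) (α₀ : Path x₀ x₀) : ℝ≥0∞ :=
  ⨅ (f : T → UnitAddCircle) (_ : DegOneLip x₀ α₀ f) (ρ : T → ℝ≥0∞)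
    (_ : Measurable ρ ∧ IsWeakUpperGradient μ p f ρ),
      ∫⁻ x, ρ x ^ p ∂μ

/-- The pointwise Lipschitz constant `Lip f (x)`. -/
def pLip {T : Type*} [MetricSpace T] (f : T → UnitAddCircle) (x : T) : ℝ≥0∞ :=
  Filter.limsup
    (fun r : ℝ => ⨆ y ∈ ball x r, edist (f x) (f y) / ENNReal.ofReal r) (𝓝[>] (0 : ℝ))

/-- The degree 1 `p`-capacity of `T`, defined through pointwise Lipschitz constants. -/
def capLip {T : Type*} [MetricSpace T] [MeasurableSpace T] (μ : Measure T) (p : ℝ)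
    (x₀ : T) (α₀ : Path x₀ x₀) : ℝ≥0∞ :=
  ⨅ (f : T → UnitAddCircle) (_ : DegOneLip x₀ α₀ f), ∫⁻ x, pLip f x ^ p ∂μ

/-- The codimension 1 spherical Hausdorff measure, as a set function:
`H(A) = sup_{δ>0} inf { ∑ μ(B_i)/r_i }`, the infimum being over countable covers of `A`
by balls `B_i` of radii `r_i ≤ δ`. -/
def codimH {T : Type*} [MetricSpace T] [MeasurableSpace T] (μ : Measure T)
    (A : Set T) : ℝ≥0∞ :=
  ⨆ (δ : ℝ) (_ : 0 < δ),
    ⨅ (c : ℕ → T) (r : ℕ → ℝ) (_ : ∀ i, r i ≤ δ)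
      (_ : A ⊆ ⋃ i, ball (c i) (r i)),
        ∑' i, μ (ball (c i) (r i)) / ENNReal.ofReal (r i)

/-- The integral `∫_S g dH` of `g ≥ 0` over `S` against the codimension 1 Hausdorff
measure, via the layer-cake (Choquet) formula. -/
def choquetIntegral {T : Type*} [MetricSpace T] [MeasurableSpace T] (μ : Measure T)
    (S : Set T) (g : T → ℝ≥0∞) : ℝ≥0∞ :=
  ∫⁻ t in Set.Ioi (0 : ℝ), codimH μ {x | x ∈ S ∧ ENNReal.ofReal t < g x}

/-- The family `Γ*` of all level sets `φ⁻¹[0]` of finite codimension 1 Hausdorff measure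
of continuous degree-1 maps `φ : T → ℝ/ℤ`. -/
def Surfaces {T : Type*} [MetricSpace T] [MeasurableSpace T] (μ : Measure T)
    (x₀ : T) (α₀ : Path x₀ x₀) : Set (Set T) :=
  {S | ∃ φ : T → UnitAddCircle, HasDegree x₀ α₀ φ 1 ∧ S = φ ⁻¹' {0} ∧ codimH μ S < ⊤}

/-- The surface `q`-modulus of a family of surfaces, the surfaces being equipped with the
codimension 1 Hausdorff measure. -/
def surfModOf {T : Type*} [MetricSpace T] [MeasurableSpace T] (μ : Measure T) (q : ℝ)
    (𝒮 : Set (Set T)) : ℝ≥0∞ :=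
  ⨅ (ρ : T → ℝ≥0∞) (_ : Measurable ρ ∧ ∀ S ∈ 𝒮, 1 ≤ choquetIntegral μ S ρ),
    ∫⁻ x, ρ x ^ q ∂μ

/-- The surface modulus `mod_q T`. -/
def surfMod {T : Type*} [MetricSpace T] [MeasurableSpace T] (μ : Measure T) (q : ℝ)
    (x₀ : T) (α₀ : Path x₀ x₀) : ℝ≥0∞ :=
  surfModOf μ q (Surfaces μ x₀ α₀)

/-- The family `Γ*` with the `(q-1)`-dimensional Hausdorff measure instead. -/
def SurfacesH {T : Type*} [MetricSpace T] [MeasurableSpace T] [BorelSpace T] (q : ℝ)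
    (x₀ : T) (α₀ : Path x₀ x₀) : Set (Set T) :=
  {S | ∃ φ : T → UnitAddCircle, HasDegree x₀ α₀ φ 1 ∧ S = φ ⁻¹' {0} ∧ μH[q - 1] S < ⊤}

/-- The surface modulus `mod_q T` defined through the `(q-1)`-dimensional Hausdorff
measures `H^{q-1} ⌞ S`, `S ∈ Γ*`. -/
def surfModH {T : Type*} [MetricSpace T] [MeasurableSpace T] [BorelSpace T]
    (μ : Measure T) (q pstar : ℝ) (x₀ : T) (α₀ : Path x₀ x₀) : ℝ≥0∞ :=
  ⨅ (ρ : T → ℝ≥0∞)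
    (_ : Measurable ρ ∧ ∀ S ∈ SurfacesH (T := T) q x₀ α₀, 1 ≤ ∫⁻ x in S, ρ x ∂μH[q - 1]),
      ∫⁻ x, ρ x ^ pstar ∂μ

/-- The standing assumptions 2.1. -/
def Standing {T : Type*} [MetricSpace T] [MeasurableSpace T] (μ : Measure T)
    (Cμ : ℝ≥0∞) (CP lP : ℝ) (x₀ : T) (α₀ : Path x₀ x₀) : Prop :=
  IsDoubling μ Cμ ∧ SupportsPoincare μ CP lP ∧ SemilocallySimplyConnected T ∧
    IsGenerator x₀ α₀ ∧ ∃ f : T → UnitAddCircle, DegOneLip x₀ α₀ f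

/-! ### The universal cover -/

/-- `π` is a local isometry. -/
def IsLocalIsometry {X Y : Type*} [MetricSpace X] [MetricSpace Y] (π : X → Y) : Prop :=
  ∀ x : X, ∃ ε : ℝ, 0 < ε ∧
    ∀ y ∈ ball x ε, ∀ z ∈ ball x ε, dist (π y) (π z) = dist y z

/-- `(T̃, π)` is the universal cover of `T`, with `T̃` carrying the length metric pulled
back by `π` (so that `π` is a local isometry). -/
def CoverSetup {T Tt : Type*} [MetricSpace T] [MetricSpace Tt] (π : Tt → T) : Prop :=
  IsCoveringMap π ∧ Function.Surjective π ∧ IsLocalIsometry π ∧ SimplyConnectedSpace Tt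

/-- `τ` is the deck transformation of the cover `π` determined by
`τ (γ̃ 0) = γ̃ 1` for every lift `γ̃` of every degree-1 loop `γ`. -/
def IsDeck {T Tt : Type*} [MetricSpace T] [MetricSpace Tt] (π : Tt → T)
    (x₀ : T) (α₀ : Path x₀ x₀) (τ : Tt → Tt) : Prop :=
  Continuous τ ∧ (∀ x, π (τ x) = π x) ∧
    ∀ (x : T) (γ : Path x x), IsDegreeOneLoop x₀ α₀ γ →
      ∀ γt : C(unitInterval, Tt), (∀ t, π (γt t) = γ t) → τ (γt 0) = γt 1

/-- `μ̃` is the natural lift of `μ` to the cover: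
`μ̃ (A) = ∫ #(π⁻¹(x) ∩ A) dμ (x)`. -/
def IsLiftedMeasure {T Tt : Type*} [MetricSpace T] [MeasurableSpace T]
    [MetricSpace Tt] [MeasurableSpace Tt] (π : Tt → T) (μ : Measure T)
    (μt : Measure Tt) : Prop :=
  ∀ A : Set Tt, MeasurableSet A → μt A = ∫⁻ x, ((π ⁻¹' {x} ∩ A).encard : ℝ≥0∞) ∂μ

/-! ### Newtonian spaces -/

/-- The seminorm of `N^{1,p}(U)`. -/
def NSeminorm {X : Type*} [PseudoMetricSpace X] [MeasurableSpace X] (μ : Measure X)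
    (p : ℝ) (U : Set X) (f : X → ℝ) : ℝ≥0∞ :=
  (∫⁻ x in U, ENNReal.ofReal |f x| ^ p ∂μ) ^ (1 / p) +
    ⨅ (ρ : X → ℝ≥0∞) (_ : Measurable ρ ∧ IsWeakUpperGradientOn μ p U f ρ),
      (∫⁻ x in U, ρ x ^ p ∂μ) ^ (1 / p)

/-- `f ∈ N^{1,p}_loc`. -/
def MemNloc {X : Type*} [PseudoMetricSpace X] [MeasurableSpace X] (μ : Measure X)
    (p : ℝ) (f : X → ℝ) : Prop :=
  ∀ U : Set X, IsOpen U → IsCompact (closure U) →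
    (∫⁻ x in U, ENNReal.ofReal |f x| ^ p ∂μ) < ⊤ ∧
      ∃ ρ : X → ℝ≥0∞, Measurable ρ ∧ IsWeakUpperGradientOn μ p U f ρ ∧
        (∫⁻ x in U, ρ x ^ p ∂μ) < ⊤

/-- The collection `F`: nonnegative Borel functions `ρ` on `T` such that `ρ ∘ π` is a
`p`-weak upper gradient of some `f ∈ N^{1,p}_loc (T̃)` with `f ∘ τ - f = 1` a.e. -/
def MemF {T Tt : Type*} [MetricSpace T] [MeasurableSpace T] [MetricSpace Tt]
    [MeasurableSpace Tt] (π : Tt → T) (τ : Tt → Tt) (μt : Measure Tt) (p : ℝ)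
    (ρ : T → ℝ≥0∞) : Prop :=
  Measurable ρ ∧ ∃ f : Tt → ℝ, MemNloc μt p f ∧ (∀ᵐ x ∂μt, f (τ x) - f x = 1) ∧
    IsWeakUpperGradient μt p f (ρ ∘ π)

/-- The capacity `cap_p^F T`. -/
def capF {T Tt : Type*} [MetricSpace T] [MeasurableSpace T] [MetricSpace Tt]
    [MeasurableSpace Tt] (μ : Measure T) (π : Tt → T) (τ : Tt → Tt) (μt : Measure Tt)
    (p : ℝ) : ℝ≥0∞ :=
  ⨅ (ρ : T → ℝ≥0∞) (_ : MemF π τ μt p ρ), ∫⁻ x, ρ x ^ p ∂μ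

/-! ### Miscellaneous operators -/

/-- The restricted Hardy–Littlewood maximal operator `M_R`. -/
def restrMax {T : Type*} [MetricSpace T] [MeasurableSpace T] (μ : Measure T)
    (R : ℝ≥0∞) (g : T → ℝ≥0∞) (x : T) : ℝ≥0∞ :=
  ⨆ (s : ℝ) (_ : 0 < s ∧ ENNReal.ofReal s ≤ R),
    (∫⁻ y in ball x s, g y ∂μ) / μ (ball x s)

/-- The upper Lebesgue integral. -/
def upperLintegral {Y : Type*} [MeasurableSpace Y] (ν : Measure Y)
    (F : Y → ℝ≥0∞) : ℝ≥0∞ :=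
  ⨅ (G : Y → ℝ≥0∞) (_ : Measurable G ∧ ∀ y, F y ≤ G y), ∫⁻ y, G y ∂ν

/-! ### The sets `Ω` and the functions `ψ̃`, `ζ`, `ψ` of Section 4.3 -/

/-- The set of points reachable from `A` by a rectifiable path inside `W`. -/
def reach {T : Type*} [MetricSpace T] (A W : Set T) : Set T :=
  {x | ∃ γ : UPath T, γ.start ∈ A ∧ γ.finish = x ∧ γ.InSet W}

/-- `inf_γ ∫_γ ρ ds` over rectifiable paths connecting `A` to `x` inside `W`. -/
def pathDist {T : Type*} [MetricSpace T] (ρ : T → ℝ≥0∞) (A W : Set T) (x : T) : ℝ≥0∞ :=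
  ⨅ (γ : UPath T) (_ : γ.start ∈ A ∧ γ.finish = x ∧ γ.InSet W), γ.integral ρ

open scoped Classical in
/-- The function `ψ̃`. -/
def psiTilde {T : Type*} [MetricSpace T] (ρ : T → ℝ≥0∞) (A W : Set T) (x : T) : ℝ :=
  if x ∈ reach A W then (pathDist ρ A W x).toReal else 0

/-- The function `min {1, ψ̃}`. -/
def zeta {T : Type*} [MetricSpace T] (ρ : T → ℝ≥0∞) (A W : Set T) (x : T) : ℝ :=
  min 1 (psiTilde ρ A W x)

/-- The competing admissible map `ψ = [min {1, ψ̃}] : T → ℝ/ℤ`. -/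
def psiMap {T : Type*} [MetricSpace T] (ρ : T → ℝ≥0∞) (A W : Set T) (x : T) :
    UnitAddCircle :=
  ((zeta ρ A W x : ℝ) : UnitAddCircle)

end Duality

namespace Duality

/-! ### Operations on paths -/

namespace UPath

variable {X : Type*} [PseudoMetricSpace X]

/-- The reversed path. -/
def rev (γ : UPath X) : UPath X where
  a := γ.a
  b := γ.b
  hab := γ.hab
  toFun := fun t => γ.toFun (γ.a + γ.b - t)
  lip := by
    intro s hs t ht
    have hs' : γ.a + γ.b - s ∈ Icc γ.a γ.b := ⟨by linarith [hs.2], by linarith [hs.1]⟩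
    have ht' : γ.a + γ.b - t ∈ Icc γ.a γ.b := ⟨by linarith [ht.2], by linarith [ht.1]⟩
    simpa using γ.lip hs' ht'

lemma start_rev (γ : UPath X) : γ.rev.start = γ.finish := by simp [rev, start, finish]

lemma finish_rev (γ : UPath X) : γ.rev.finish = γ.start := by simp [rev, start, finish]

lemma integral_rev (γ : UPath X) (ρ : X → ℝ≥0∞) : γ.rev.integral ρ = γ.integral ρ := by
  unfold integral
  rw [← lintegral_indicator measurableSet_Icc, ← lintegral_indicator measurableSet_Icc,
    ← lintegral_sub_left_eq_self _ (γ.a + γ.b)]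
  refine lintegral_congr fun t => ?_
  have h : γ.a + γ.b - t ∈ Icc γ.a γ.b ↔ t ∈ Icc γ.a γ.b := by
    constructor <;> rintro ⟨h₁, h₂⟩ <;> constructor <;> linarith
  by_cases ht : t ∈ Icc γ.a γ.b
  · have ht' := h.2 ht
    simp [rev, indicator_of_mem, ht, ht']
  · have ht' := fun h' => ht (h.1 h')
    simp only [rev]
    rw [indicator_of_notMem ht', indicator_of_notMem ht]

/-- The part of a path after time `s`. -/
def tail (γ : UPath X) (s : ℝ) (hs : s ∈ Icc γ.a γ.b) : UPath X where
  a := s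
  b := γ.b
  hab := hs.2
  toFun := γ.toFun
  lip := γ.lip.mono (Icc_subset_Icc_left hs.1)

lemma integral_tail_le (γ : UPath X) (s : ℝ) (hs : s ∈ Icc γ.a γ.b) (ρ : X → ℝ≥0∞) :
    (γ.tail s hs).integral ρ ≤ γ.integral ρ :=
  lintegral_mono_set (Icc_subset_Icc_left hs.1)

lemma start_eq_finish (γ : UPath X) (h : γ.a = γ.b) : γ.start = γ.finish := by
  simp [start, finish, h]

lemma dist_le (γ : UPath X) {s t : ℝ} (hs : s ∈ Icc γ.a γ.b) (ht : t ∈ Icc γ.a γ.b) :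
    dist (γ.toFun s) (γ.toFun t) ≤ |s - t| := by
  simpa [Real.dist_eq] using γ.lip.dist_le_mul s hs t ht

lemma left_mem (γ : UPath X) : γ.a ∈ Icc γ.a γ.b := left_mem_Icc.2 γ.hab

lemma right_mem (γ : UPath X) : γ.b ∈ Icc γ.a γ.b := right_mem_Icc.2 γ.hab

end UPath

/-! ### Upper gradients -/

section UpperGradient

variable {X : Type*} [PseudoMetricSpace X]

lemma isUpperGradient_of_sub_le {u : X → ℝ} {ρ : X → ℝ≥0∞}
    (h : ∀ γ : UPath X, ENNReal.ofReal (u γ.start - u γ.finish) ≤ γ.integral ρ) :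
    IsUpperGradient u ρ := by
  intro γ
  have h₁ := h γ
  have h₂ := h γ.rev
  rw [UPath.start_rev, UPath.finish_rev, UPath.integral_rev] at h₂
  rw [edist_dist, Real.dist_eq]
  rcases abs_cases (u γ.start - u γ.finish) with h₃ | h₃
  · rwa [h₃.1]
  · rwa [h₃.1, neg_sub]

/-- The cutoff function which is `1` on `ball c r` and vanishes off `ball c (2 * r)`. -/
def tent (c : X) (r : ℝ) (y : X) : ℝ := if 0 < r then max 0 (min 1 (2 - dist y c / r)) else 0

lemma tent_nonneg (c : X) (r : ℝ) (y : X) : 0 ≤ tent c r y := by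
  unfold tent; split_ifs <;> simp

lemma tent_le_one (c : X) (r : ℝ) (y : X) : tent c r y ≤ 1 := by
  unfold tent; split_ifs <;> simp

lemma tent_eq_one {c : X} {r : ℝ} {y : X} (h : y ∈ ball c r) : tent c r y = 1 := by
  have hr : 0 < r := pos_of_mem_ball h
  have : dist y c / r ≤ 1 := (div_le_one hr).2 (mem_ball.1 h).le
  simp only [tent, hr, if_true]
  rw [min_eq_left (by linarith)]
  simp

lemma tent_eq_zero {c : X} {r : ℝ} {y : X} (h : y ∉ ball c (2 * r)) : tent c r y = 0 := by
  unfold tent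
  split_ifs with hr
  · have : 2 ≤ dist y c / r := (le_div_iff₀ hr).2 (not_lt.1 h)
    exact max_eq_left ((min_le_right _ _).trans (by linarith))
  · rfl

lemma continuous_tent (c : X) (r : ℝ) : Continuous (tent c r) := by
  unfold tent
  split_ifs <;> fun_prop

lemma tent_sub_le {c : X} {r : ℝ} (hr : 0 < r) (y z : X) :
    tent c r y - tent c r z ≤ dist y z / r := by
  have h₁ : dist z c / r ≤ (dist y z + dist y c) / r := by
    gcongr; rw [dist_comm y z]; exact dist_triangle _ _ _
  rw [add_div] at h₁
  have h₂ : 0 ≤ dist y z / r := by positivity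
  simp only [tent, hr, if_true]
  rw [sub_le_iff_le_add]
  refine max_le (add_nonneg h₂ (le_max_left _ _)) ?_
  rcases le_total 1 (2 - dist z c / r) with h | h
  · exact (min_le_left _ _).trans (by rw [min_eq_left h]; simpa using h₂)
  · refine (min_le_right _ _).trans ?_
    rw [min_eq_right h]
    have := le_max_right 0 (2 - dist z c / r)
    linarith

lemma tent_sub_le_integral (c : X) (r : ℝ) (γ : UPath X) :
    ENNReal.ofReal (tent c r γ.start - tent c r γ.finish) ≤
      γ.integral ((ball c (2 * r)).indicator fun _ => (ENNReal.ofReal r)⁻¹) := by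
  rcases le_or_gt r 0 with hr | hr
  · simp [tent, not_lt.2 hr]
  obtain ⟨t, ht, htb, hft⟩ : ∃ t ∈ Icc γ.a γ.b, (∀ s ∈ Ico γ.a t, γ.toFun s ∈ ball c (2 * r)) ∧
      tent c r (γ.toFun t) ≤ tent c r γ.finish := by
    by_cases hex : ∀ s ∈ Icc γ.a γ.b, γ.toFun s ∈ ball c (2 * r)
    · exact ⟨γ.b, γ.right_mem, fun s hs => hex s (Ico_subset_Icc_self hs), le_rfl⟩
    push Not at hex
    have hc : IsCompact (Icc γ.a γ.b ∩ γ.toFun ⁻¹' (ball c (2 * r))ᶜ) :=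
      isCompact_Icc.of_isClosed_subset
        (γ.lip.continuousOn.preimage_isClosed_of_isClosed isClosed_Icc isOpen_ball.isClosed_compl)
        inter_subset_left
    obtain ⟨t, ht, hmin⟩ := hc.exists_isLeast hex
    refine ⟨t, ht.1, fun s hs => ?_, ?_⟩
    · by_contra h
      exact absurd (hmin ⟨⟨hs.1, hs.2.le.trans ht.1.2⟩, h⟩) (not_le.2 hs.2)
    · rw [tent_eq_zero ht.2]; exact tent_nonneg _ _ _
  calc ENNReal.ofReal (tent c r γ.start - tent c r γ.finish)
      ≤ ENNReal.ofReal ((t - γ.a) / r) := by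
        refine ENNReal.ofReal_le_ofReal ?_
        have h₁ := tent_sub_le (c := c) hr γ.start (γ.toFun t)
        have h₂ : dist γ.start (γ.toFun t) ≤ t - γ.a := by
          have := γ.dist_le γ.left_mem ht
          rwa [abs_sub_comm, abs_of_nonneg (by linarith [ht.1])] at this
        have h₃ : dist γ.start (γ.toFun t) / r ≤ (t - γ.a) / r := by gcongr
        linarith
    _ = ∫⁻ _ in Ico γ.a t, (ENNReal.ofReal r)⁻¹ := by
        rw [setLIntegral_const, Real.volume_Ico, ENNReal.ofReal_div_of_pos hr, div_eq_mul_inv,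
          mul_comm]
    _ = ∫⁻ s in Ico γ.a t,
          (ball c (2 * r)).indicator (fun _ => (ENNReal.ofReal r)⁻¹) (γ.toFun s) := by
        refine setLIntegral_congr_fun measurableSet_Ico fun s hs => ?_
        simp only [indicator_of_mem (htb s hs)]
    _ ≤ _ := 
        lintegral_mono_set (Ico_subset_Icc_self.trans (Icc_subset_Icc_right ht.2))

/-- The supremum of a sequence of cutoff functions. -/
def supTent (c : ℕ → X) (r : ℕ → ℝ) (y : X) : ℝ := ⨆ i, tent (c i) (r i) y

/-- The upper gradient of `supTent c r` given by the radii. -/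
def sumGrad (c : ℕ → X) (r : ℕ → ℝ) (y : X) : ℝ≥0∞ :=
  ∑' i, (ball (c i) (2 * r i)).indicator (fun _ => (ENNReal.ofReal (r i))⁻¹) y

variable {c : ℕ → X} {r : ℕ → ℝ}

lemma bddAbove_tent (c : ℕ → X) (r : ℕ → ℝ) (y : X) :
    BddAbove (range fun i => tent (c i) (r i) y) :=
  ⟨1, by rintro _ ⟨i, rfl⟩; exact tent_le_one _ _ _⟩

lemma supTent_le_one (c : ℕ → X) (r : ℕ → ℝ) (y : X) : supTent c r y ≤ 1 :=
  ciSup_le fun _ => tent_le_one _ _ _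

lemma supTent_nonneg (c : ℕ → X) (r : ℕ → ℝ) (y : X) : 0 ≤ supTent c r y :=
  (tent_nonneg _ _ _).trans (le_ciSup (bddAbove_tent c r y) 0)

lemma supTent_eq_one {y : X} (h : y ∈ ⋃ i, ball (c i) (r i)) : supTent c r y = 1 := by
  obtain ⟨i, hi⟩ := mem_iUnion.1 h
  refine (supTent_le_one c r y).antisymm ?_
  rw [← tent_eq_one hi]
  exact le_ciSup (bddAbove_tent c r y) i

lemma supTent_eq_zero {y : X} (h : y ∉ ⋃ i, ball (c i) (2 * r i)) : supTent c r y = 0 := by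
  simp only [mem_iUnion, not_exists] at h
  simp [supTent, tent_eq_zero (h _)]

lemma supTent_sub_le_integral (γ : UPath X) :
    ENNReal.ofReal (supTent c r γ.start - supTent c r γ.finish) ≤ γ.integral (sumGrad c r) := by
  have key : ∀ i, ENNReal.ofReal (tent (c i) (r i) γ.start - supTent c r γ.finish) ≤
      γ.integral (sumGrad c r) := by
    intro i
    calc _ ≤ ENNReal.ofReal (tent (c i) (r i) γ.start - tent (c i) (r i) γ.finish) := by
          gcongr; exact le_ciSup (bddAbove_tent c r γ.finish) i
      _ ≤ _ := tent_sub_le_integral _ _ _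
      _ ≤ _ := by
          refine lintegral_mono fun s => ?_
          exact ENNReal.le_tsum (f := fun i =>
            (ball (c i) (2 * r i)).indicator (fun _ => (ENNReal.ofReal (r i))⁻¹) (γ.toFun s)) i
  by_cases htop : γ.integral (sumGrad c r) = ⊤
  · simp [htop]
  rw [ENNReal.ofReal_le_iff_le_toReal htop, sub_le_iff_le_add]
  refine ciSup_le fun i => ?_
  rw [← sub_le_iff_le_add, ← ENNReal.ofReal_le_iff_le_toReal htop]
  exact key i

open scoped Classical in
/-- The indicator of `A`, corrected off `A` by the cutoff functions of a family of balls. -/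
def cutIndicator (A : Set X) (c : ℕ → X) (r : ℕ → ℝ) (y : X) : ℝ :=
  if y ∈ A then 1 else supTent c r y

lemma cutIndicator_mem_Icc (A : Set X) (c : ℕ → X) (r : ℕ → ℝ) (y : X) :
    cutIndicator A c r y ∈ Icc (0 : ℝ) 1 := by
  unfold cutIndicator
  split_ifs
  · simp
  · exact ⟨supTent_nonneg c r y, supTent_le_one c r y⟩

/-- If `S` separates `A` from its complement inside a ball and is covered there by balls, then
`cutIndicator` has the upper gradient `sumGrad` on the concentric ball of half the radius. -/
lemma isUpperGradient_cutIndicator {A S : Set X} {x : X} {R : ℝ} (hR : 0 < R)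
    (hsep : ∀ γ : UPath X, γ.InSet (ball x (2 * R)) → γ.start ∈ A → γ.finish ∉ A →
      ∃ t ∈ Icc γ.a γ.b, γ.toFun t ∈ S)
    {c : ℕ → X} {r : ℕ → ℝ} (hcov : S ∩ ball x (2 * R) ⊆ ⋃ i, ball (c i) (r i)) :
    IsUpperGradient (cutIndicator A c r)
      (fun y => sumGrad c r y + (ball x R)ᶜ.indicator (fun _ => ⊤) y) := by
  refine isUpperGradient_of_sub_le fun γ => ?_
  rcases γ.hab.eq_or_lt with hab | hab
  · simp [γ.start_eq_finish hab]
  by_cases hin : γ.InSet (ball x (2 * R))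
  swap
  · obtain ⟨t₀, ht₀, hout⟩ : ∃ t ∈ Icc γ.a γ.b, γ.toFun t ∉ ball x (2 * R) := by
      simpa only [UPath.InSet, not_forall, exists_prop] using hin
    have hout' : 2 * R ≤ dist (γ.toFun t₀) x := not_lt.1 hout
    have hsub : ∀ t ∈ Icc (max γ.a (t₀ - R)) (min γ.b (t₀ + R)),
        (ball x R)ᶜ.indicator (fun _ => (⊤ : ℝ≥0∞)) (γ.toFun t) = ⊤ := by
      intro t ht
      simp only [mem_Icc, max_le_iff, le_min_iff] at ht
      refine indicator_of_mem (not_lt.2 ?_ : ¬ dist (γ.toFun t) x < R) _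
      have h₁ := γ.dist_le ht₀ (t := t) ⟨ht.1.1, ht.2.1⟩
      have h₂ : |t₀ - t| ≤ R := abs_le.2 ⟨by linarith [ht.2.2], by linarith [ht.1.2]⟩
      have h₃ := dist_triangle (γ.toFun t₀) (γ.toFun t) x
      linarith
    have hlt : max γ.a (t₀ - R) < min γ.b (t₀ + R) :=
      max_lt (lt_min hab (by linarith [ht₀.1])) (lt_min (by linarith [ht₀.2]) (by linarith))
    have : γ.integral (fun y => sumGrad c r y + (ball x R)ᶜ.indicator (fun _ => ⊤) y) = ⊤ := by
      refine top_le_iff.1 ?_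
      calc (⊤ : ℝ≥0∞) = ∫⁻ _ in Icc (max γ.a (t₀ - R)) (min γ.b (t₀ + R)), ⊤ := by
            rw [setLIntegral_const, Real.volume_Icc, ENNReal.top_mul]
            exact (ENNReal.ofReal_pos.2 (sub_pos.2 hlt)).ne'
        _ = ∫⁻ t in Icc (max γ.a (t₀ - R)) (min γ.b (t₀ + R)),
              (ball x R)ᶜ.indicator (fun _ => (⊤ : ℝ≥0∞)) (γ.toFun t) :=
            setLIntegral_congr_fun measurableSet_Icc fun t ht => (hsub t ht).symm
        _ ≤ ∫⁻ t in Icc γ.a γ.b, (ball x R)ᶜ.indicator (fun _ => (⊤ : ℝ≥0∞)) (γ.toFun t) :=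
            lintegral_mono_set (Icc_subset_Icc (le_max_left _ _) (min_le_left _ _))
        _ ≤ _ := lintegral_mono fun t => le_add_self
    rw [this]
    exact le_top
  refine le_trans ?_ (lintegral_mono fun t => le_self_add : γ.integral (sumGrad c r) ≤ _)
  by_cases hs : γ.start ∈ A
  · by_cases hf : γ.finish ∈ A
    · simp [cutIndicator, hs, hf]
    obtain ⟨t, ht, htS⟩ := hsep γ hin hs hf
    have h₁ : supTent c r (γ.tail t ht).start = 1 := supTent_eq_one (hcov ⟨htS, hin t ht⟩)
    have h₂ := supTent_sub_le_integral (c := c) (r := r) (γ.tail t ht)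
    rw [h₁] at h₂
    simp only [cutIndicator, hs, hf, if_true, if_false]
    exact h₂.trans (γ.integral_tail_le t ht _)
  · by_cases hf : γ.finish ∈ A
    · simp only [cutIndicator, hs, hf, if_true, if_false]
      rw [ENNReal.ofReal_of_nonpos (by linarith [supTent_le_one c r γ.start])]
      exact zero_le
    · simp only [cutIndicator, hs, hf, if_false]
      exact supTent_sub_le_integral γ

end UpperGradient

end Duality

namespace Duality

/-! ### Consequences of doubling and of the Poincaré inequality -/

lemma ofReal_mul_diam_ball_le {T : Type*} [PseudoMetricSpace T] (CP : ℝ) {x : T} {r : ℝ} (hr : 0 ≤ r) :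
    ENNReal.ofReal (CP * diam (ball x r)) ≤ ENNReal.ofReal (2 * |CP|) * ENNReal.ofReal r := by
  rw [← ENNReal.ofReal_mul (by positivity)]
  refine ENNReal.ofReal_le_ofReal ?_
  calc CP * diam (ball x r) ≤ |CP| * diam (ball x r) := by
        gcongr; exact le_abs_self _
    _ ≤ |CP| * (2 * r) := by gcongr; exact diam_ball hr
    _ = _ := by ring

/-- If `u` is `1` on `E` and `0` on `F`, the smaller of the two measures is controlled by the
mean deviation of `u` from any constant. -/
lemma min_measure_le_setLIntegral_sub {T : Type*} [MeasurableSpace T] {μ : Measure T} {u : T → ℝ} {B E F : Set T} (hE : MeasurableSet E)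
    (hF : MeasurableSet F) (hEB : E ⊆ B) (hFB : F ⊆ B) (hEF : Disjoint E F)
    (hu₁ : ∀ y ∈ E, u y = 1) (hu₀ : ∀ y ∈ F, u y = 0) (c : ℝ) :
    min (μ E) (μ F) ≤ ∫⁻ y in B, ENNReal.ofReal |u y - c| ∂μ := by
  have h₁ : ∫⁻ y in E, ENNReal.ofReal |u y - c| ∂μ = ENNReal.ofReal |1 - c| * μ E := by
    rw [← setLIntegral_const]
    exact setLIntegral_congr_fun hE fun y hy => by simp only [hu₁ y hy]
  have h₀ : ∫⁻ y in F, ENNReal.ofReal |u y - c| ∂μ = ENNReal.ofReal |c| * μ F := by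
    rw [← setLIntegral_const]
    exact setLIntegral_congr_fun hF fun y hy => by simp only [hu₀ y hy, zero_sub, abs_neg]
  have h₂ : (1 : ℝ≥0∞) ≤ ENNReal.ofReal |1 - c| + ENNReal.ofReal |c| := by
    rw [← ENNReal.ofReal_add (abs_nonneg _) (abs_nonneg _), ← ENNReal.ofReal_one]
    refine ENNReal.ofReal_le_ofReal ?_
    have := abs_add_le (1 - c) c
    simpa using this
  calc min (μ E) (μ F)
      ≤ (ENNReal.ofReal |1 - c| + ENNReal.ofReal |c|) * min (μ E) (μ F) := le_mul_of_one_le_left' h₂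
    _ ≤ ENNReal.ofReal |1 - c| * μ E + ENNReal.ofReal |c| * μ F := by
        rw [add_mul]
        gcongr
        · exact min_le_left _ _
        · exact min_le_right _ _
    _ = ∫⁻ y in E ∪ F, ENNReal.ofReal |u y - c| ∂μ := by
        rw [lintegral_union hF hEF, h₁, h₀]
    _ ≤ _ := lintegral_mono_set (union_subset hEB hFB)

section Poincare

variable {T : Type*} [MetricSpace T] [MeasurableSpace T] {μ : Measure T} {Cμ : ℝ≥0∞} {CP lP : ℝ}

lemma IsDoubling.measure_ball_le_pow (hd : IsDoubling μ Cμ) {x : T} {r : ℝ} (hr : 0 < r)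
    (hr' : r < diam (univ : Set T)) (m : ℕ) :
    μ (ball x r) ≤ Cμ ^ m * μ (ball x (r / 2 ^ m)) := by
  induction m with
  | zero => simp
  | succ m ih =>
    have hlt : r / 2 ^ (m + 1) < diam (univ : Set T) :=
      (div_le_self hr.le (one_le_pow₀ one_le_two)).trans_lt hr'
    have h := (hd x (r / 2 ^ (m + 1)) (by positivity) hlt).2.1
    rw [show 2 * (r / 2 ^ (m + 1)) = r / 2 ^ m by field_simp; ring] at h
    calc _ ≤ _ := ih
      _ ≤ Cμ ^ m * (Cμ * μ (ball x (r / 2 ^ (m + 1)))) := by gcongr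
      _ = _ := by ring

lemma IsDoubling.ne_top (hd : IsDoubling μ Cμ) (hP : SupportsPoincare μ CP lP) (x : T)
    (hT : 0 < diam (univ : Set T)) : Cμ ≠ ⊤ := by
  rintro rfl
  have hr := half_pos hT
  have h := (hd x _ hr (half_lt_self hT)).2.2
  rw [ENNReal.top_mul (hP.1 x _ hr).1.ne'] at h
  exact lt_irrefl _ h

lemma SupportsPoincare.isFiniteMeasure [CompactSpace T] [Nonempty T]
    (hP : SupportsPoincare μ CP lP) : IsFiniteMeasure μ := by
  obtain ⟨x⟩ := ‹Nonempty T›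
  refine ⟨?_⟩
  have hb : Bornology.IsBounded (univ : Set T) := isCompact_univ.isBounded
  have hD : 0 ≤ diam (univ : Set T) := diam_nonneg
  have : (univ : Set T) ⊆ ball x (diam (univ : Set T) + 1) := fun y _ =>
    mem_ball.2 ((dist_le_diam_of_mem hb (mem_univ _) (mem_univ _)).trans_lt (by linarith))
  exact (measure_mono this).trans_lt (hP.1 x _ (by linarith)).2

/-- A form of the Poincaré inequality in which the averages are normalized by the same ball. -/
lemma SupportsPoincare.setLIntegral_sub_average_le (hP : SupportsPoincare μ CP lP)
    (hd : IsDoubling μ Cμ) {Λ : ℝ} (hΛ : lP ≤ Λ) {m : ℕ} (hm : 0 < lP → (1 / 2) ^ m ≤ lP)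
    {u : T → ℝ} {ρ : T → ℝ≥0∞} (hu : LocallyIntegrable u μ) (hρ : Measurable ρ)
    (hug : IsUpperGradient u ρ) {x : T} {r : ℝ} (hr : 0 < r) (hr' : r < diam (univ : Set T)) :
    ∫⁻ y in ball x r, ENNReal.ofReal |u y - ⨍ z in ball x r, u z ∂μ| ∂μ ≤
      ENNReal.ofReal (2 * |CP|) * Cμ ^ m * ENNReal.ofReal r * ∫⁻ y in ball x (Λ * r), ρ y ∂μ := by
  have hB := hP.1 x r hr
  have h := hP.2 u ρ hu hρ hug x r hr
  rw [ENNReal.div_le_iff hB.1.ne' hB.2.ne, mul_assoc] at h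
  have key : (∫⁻ y in ball x (lP * r), ρ y ∂μ) / μ (ball x (lP * r)) * μ (ball x r) ≤
      Cμ ^ m * ∫⁻ y in ball x (Λ * r), ρ y ∂μ := by
    rcases le_or_gt lP 0 with hl | hl
    · rw [ball_eq_empty.2 (mul_nonpos_of_nonpos_of_nonneg hl hr.le)]
      simp
    have hpos := hP.1 x (lP * r) (by positivity)
    calc _ ≤ (∫⁻ y in ball x (lP * r), ρ y ∂μ) / μ (ball x (lP * r)) *
          (Cμ ^ m * μ (ball x (lP * r))) := by
          gcongr
          refine (hd.measure_ball_le_pow hr hr' m).trans ?_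
          gcongr
          rw [div_eq_inv_mul, ← inv_pow, ← one_div]
          gcongr
          exact hm hl
      _ = Cμ ^ m * ((∫⁻ y in ball x (lP * r), ρ y ∂μ) / μ (ball x (lP * r)) *
          μ (ball x (lP * r))) := by ring
      _ = Cμ ^ m * ∫⁻ y in ball x (lP * r), ρ y ∂μ := by
          rw [ENNReal.div_mul_cancel hpos.1.ne' hpos.2.ne]
      _ ≤ _ := by gcongr
  calc _ ≤ _ := h
    _ ≤ (ENNReal.ofReal (2 * |CP|) * ENNReal.ofReal r) *
        (Cμ ^ m * ∫⁻ y in ball x (Λ * r), ρ y ∂μ) :=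
        mul_le_mul' (ofReal_mul_diam_ball_le CP hr.le) key
    _ = _ := by ring

lemma IsDoubling.measure_ball_two_mul_le (hd : IsDoubling μ Cμ) (x : T) {r : ℝ}
    (hr : r < diam (univ : Set T)) : μ (ball x (2 * r)) ≤ Cμ * μ (ball x r) := by
  rcases le_or_gt r 0 with h | h
  · rw [ball_eq_empty.2 (by linarith : 2 * r ≤ 0)]; simp
  · exact (hd x r h hr).2.1

lemma locallyIntegrable_of_abs_le [IsFiniteMeasure μ] {u : T → ℝ} (hu : Measurable u) {M : ℝ}
    (hM : ∀ y, |u y| ≤ M) : LocallyIntegrable u μ :=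
  (Integrable.of_bound hu.aestronglyMeasurable M (Eventually.of_forall hM)).locallyIntegrable

lemma IsDoubling.measure_iUnion_ball_le (hd : IsDoubling μ Cμ) (c : ℕ → T) {r : ℕ → ℝ} {s : ℝ}
    (hrs : ∀ i, r i ≤ s) (hs : s < diam (univ : Set T)) :
    μ (⋃ i, ball (c i) (2 * r i)) ≤
      Cμ * ENNReal.ofReal s * ∑' i, μ (ball (c i) (r i)) / ENNReal.ofReal (r i) := by
  refine (measure_iUnion_le _).trans ?_
  rw [← ENNReal.tsum_mul_left]
  refine ENNReal.tsum_le_tsum fun i => (hd.measure_ball_two_mul_le _ ((hrs i).trans_lt hs)).trans ?_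
  rw [mul_assoc]
  gcongr
  rcases le_or_gt (r i) 0 with h | h
  · rw [ball_eq_empty.2 h]; simp
  calc μ (ball (c i) (r i)) = ENNReal.ofReal (r i) * (μ (ball (c i) (r i)) / ENNReal.ofReal (r i)) :=
        (ENNReal.mul_div_cancel (by simpa using h) ENNReal.ofReal_ne_top).symm
    _ ≤ _ := by gcongr; exact hrs i

variable [BorelSpace T]

lemma measurable_sumGrad (c : ℕ → T) (r : ℕ → ℝ) : Measurable (sumGrad c r) :=
  Measurable.tsum fun _ => measurable_const.indicator measurableSet_ball

lemma IsDoubling.lintegral_sumGrad_le (hd : IsDoubling μ Cμ) (c : ℕ → T) {r : ℕ → ℝ}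
    (hr : ∀ i, r i < diam (univ : Set T)) :
    ∫⁻ y, sumGrad c r y ∂μ ≤ Cμ * ∑' i, μ (ball (c i) (r i)) / ENNReal.ofReal (r i) := by
  unfold sumGrad
  rw [lintegral_tsum fun _ => (measurable_const.indicator measurableSet_ball).aemeasurable,
    ← ENNReal.tsum_mul_left]
  refine ENNReal.tsum_le_tsum fun i => ?_
  rw [lintegral_indicator_const measurableSet_ball, mul_comm, ← mul_div_assoc, div_eq_mul_inv]
  gcongr
  exact hd.measure_ball_two_mul_le _ (hr i)

lemma measurable_supTent (c : ℕ → T) (r : ℕ → ℝ) : Measurable (supTent c r) :=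
  Measurable.iSup fun _ => (continuous_tent _ _).measurable

lemma measurable_cutIndicator {A : Set T} (hA : MeasurableSet A) (c : ℕ → T) (r : ℕ → ℝ) :
    Measurable (cutIndicator A c r) :=
  Measurable.ite hA measurable_const (measurable_supTent c r)

/-- The relative isoperimetric inequality for the codimension 1 spherical Hausdorff measure. -/
lemma SupportsPoincare.min_measure_le [CompactSpace T] (hP : SupportsPoincare μ CP lP)
    (hd : IsDoubling μ Cμ) {Λ : ℝ} (hΛ₀ : 0 < Λ) (hΛ : lP ≤ Λ) {m : ℕ}
    (hm : 0 < lP → (1 / 2) ^ m ≤ lP) {A S : Set T} (hA : MeasurableSet A)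
    {x : T} {r : ℝ} (hr : 0 < r) (hr' : r < diam (univ : Set T))
    (hsep : ∀ γ : UPath T, γ.InSet (ball x (2 * (Λ * r))) → γ.start ∈ A → γ.finish ∉ A →
      ∃ t ∈ Icc γ.a γ.b, γ.toFun t ∈ S)
    {h : ℝ≥0∞} (hh : codimH μ (S ∩ ball x (2 * (Λ * r))) < h) :
    min (μ (ball x r ∩ A)) (μ (ball x r \ A)) ≤
      (ENNReal.ofReal (2 * |CP|) * Cμ ^ (m + 1) + Cμ) * ENNReal.ofReal r * h := by
  have : Nonempty T := ⟨x⟩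
  have := hP.isFiniteMeasure
  have hh' := (le_iSup₂ (f := fun (δ : ℝ) (_ : 0 < δ) =>
    ⨅ (c : ℕ → T) (r' : ℕ → ℝ) (_ : ∀ i, r' i ≤ δ)
      (_ : S ∩ ball x (2 * (Λ * r)) ⊆ ⋃ i, ball (c i) (r' i)),
        ∑' i, μ (ball (c i) (r' i)) / ENNReal.ofReal (r' i)) r hr).trans_lt hh
  simp only [iInf_lt_iff] at hh'
  obtain ⟨c, s, hs, hcov, hlt⟩ := hh'
  set u := cutIndicator A c s with hu_def
  have hu : Measurable u := measurable_cutIndicator hA c s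
  have hubd : ∀ y, |u y| ≤ 1 := fun y => by
    have := cutIndicator_mem_Icc A c s y
    exact abs_le.2 ⟨by linarith [this.1], this.2⟩
  set ρ : T → ℝ≥0∞ := fun y => sumGrad c s y + (ball x (Λ * r))ᶜ.indicator (fun _ => ⊤) y
  have hρ : Measurable ρ := (measurable_sumGrad c s).add
    (measurable_const.indicator measurableSet_ball.compl)
  have hug : IsUpperGradient u ρ := isUpperGradient_cutIndicator (by positivity) hsep hcov
  have hPI := hP.setLIntegral_sub_average_le hd hΛ hm (locallyIntegrable_of_abs_le hu hubd) hρ hug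
    (x := x) hr hr'
  have hρint : ∫⁻ y in ball x (Λ * r), ρ y ∂μ ≤ Cμ * h :=
    calc ∫⁻ y in ball x (Λ * r), ρ y ∂μ = ∫⁻ y in ball x (Λ * r), sumGrad c s y ∂μ := by
          refine setLIntegral_congr_fun measurableSet_ball fun y hy => ?_
          simp only [ρ, indicator_of_notMem (notMem_compl_iff.2 hy), add_zero]
      _ ≤ ∫⁻ y, sumGrad c s y ∂μ := setLIntegral_le_lintegral _ _
      _ ≤ _ := hd.lintegral_sumGrad_le c fun i => (hs i).trans_lt hr'
      _ ≤ _ := by gcongr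
  set G := ⋃ i, ball (c i) (2 * s i)
  have hG : MeasurableSet G := MeasurableSet.iUnion fun _ => measurableSet_ball
  have hGμ : μ G ≤ Cμ * ENNReal.ofReal r * h :=
    (hd.measure_iUnion_ball_le c hs hr').trans (by gcongr)
  have hmin := min_measure_le_setLIntegral_sub (μ := μ) (u := u) (B := ball x r)
    (E := ball x r ∩ A) (F := (ball x r \ A) \ G) (measurableSet_ball.inter hA)
    ((measurableSet_ball.diff hA).diff hG) inter_subset_left (sdiff_subset.trans sdiff_subset)
    (disjoint_left.2 fun y hy hy' => hy'.1.2 hy.2)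
    (fun y hy => by simp [hu_def, cutIndicator, hy.2])
    (fun y hy => by
      simp only [hu_def, cutIndicator, hy.1.2, if_false]
      exact supTent_eq_zero hy.2) (⨍ z in ball x r, u z ∂μ)
  calc min (μ (ball x r ∩ A)) (μ (ball x r \ A))
      ≤ min (μ (ball x r ∩ A)) (μ ((ball x r \ A) \ G)) + μ G := by
        rw [← min_add_add_right]
        refine min_le_min le_self_add ?_
        exact (measure_mono (by rw [sdiff_union_self]; exact subset_union_left)).trans
          (measure_union_le _ _)
    _ ≤ ENNReal.ofReal (2 * |CP|) * Cμ ^ m * ENNReal.ofReal r * (Cμ * h) +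
          Cμ * ENNReal.ofReal r * h :=
        add_le_add (hmin.trans (hPI.trans (by gcongr))) hGμ
    _ = _ := by ring

end Poincare

end Duality

namespace Duality

/-! ### Pointwise estimates for functions with a bounded upper gradient -/

section Lipschitz

variable {T : Type*} [MetricSpace T] [MeasurableSpace T] {μ : Measure T}
  {Cμ : ℝ≥0∞} {CP lP : ℝ}

lemma SupportsPoincare.abs_average_sub_average_le (hP : SupportsPoincare μ CP lP)
    [IsFiniteMeasure μ] {v : T → ℝ} (hv : Integrable v μ) (hug : IsUpperGradient v fun _ => 1)
    {x y : T} {r s D : ℝ} (hr : 0 < r) (hs : 0 < s) (hsub : ball y s ⊆ ball x r) (hD : 0 ≤ D)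
    (hDμ : μ (ball x r) ≤ ENNReal.ofReal D * μ (ball y s)) :
    |(⨍ z in ball y s, v z ∂μ) - ⨍ z in ball x r, v z ∂μ| ≤ D * (2 * |CP| * r) := by
  have hB := hP.1 x r hr
  have hB' := hP.1 y s hs
  set k := ⨍ z in ball x r, v z ∂μ
  have hI : ∫⁻ z in ball x r, ENNReal.ofReal |v z - k| ∂μ ≤
      ENNReal.ofReal (2 * |CP| * r) * μ (ball x r) := by
    have h := hP.2 v (fun _ => 1) hv.locallyIntegrable measurable_const hug x r hr
    rw [ENNReal.div_le_iff hB.1.ne' hB.2.ne] at h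
    refine h.trans ?_
    rw [setLIntegral_const, one_mul, ENNReal.ofReal_mul (p := 2 * |CP|) (by positivity)]
    refine mul_le_mul_left ?_ _
    calc _ ≤ _ := mul_le_mul' (ofReal_mul_diam_ball_le CP hr.le) ENNReal.div_self_le_one
      _ = _ := mul_one _
  have hreal : 0 < μ.real (ball y s) := ENNReal.toReal_pos hB'.1.ne' hB'.2.ne
  have havg : (⨍ z in ball y s, v z ∂μ) - k = (μ.real (ball y s))⁻¹ * ∫ z in ball y s, v z - k ∂μ := by
    rw [integral_sub hv.integrableOn (integrable_const _), setAverage_eq, setIntegral_const]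
    simp only [smul_eq_mul]
    field_simp
  have hint : ENNReal.ofReal |∫ z in ball y s, v z - k ∂μ| ≤
      ENNReal.ofReal (2 * |CP| * r) * μ (ball x r) := by
    calc _ ≤ ∫⁻ z in ball y s, ENNReal.ofReal |v z - k| ∂μ := by
          simpa only [← Real.enorm_eq_ofReal_abs] using
            enorm_integral_le_lintegral_enorm (μ := μ.restrict (ball y s)) (fun z => v z - k)
      _ ≤ _ := lintegral_mono_set hsub
      _ ≤ _ := hI
  have hfin : ENNReal.ofReal |∫ z in ball y s, v z - k ∂μ| ≤
      ENNReal.ofReal (2 * |CP| * r * (D * μ.real (ball y s))) := by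
    refine hint.trans ?_
    rw [ENNReal.ofReal_mul (p := 2 * |CP| * r) (by positivity), ENNReal.ofReal_mul hD, measureReal_def,
      ENNReal.ofReal_toReal hB'.2.ne]
    gcongr
  rw [ENNReal.ofReal_le_ofReal_iff (by positivity)] at hfin
  rw [havg, abs_mul, abs_of_pos (inv_pos.2 hreal), inv_mul_le_iff₀ hreal]
  linarith

variable [BorelSpace T]

lemma tendsto_average_ball [IsFiniteMeasure μ] (hμ : ∀ (x : T) (r : ℝ), 0 < r → 0 < μ (ball x r))
    {v : T → ℝ} (hv : Integrable v μ) {x : T} (hx : ContinuousAt v x) {s : ℕ → ℝ}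
    (hs₀ : ∀ j, 0 < s j) (hs : Tendsto s atTop (𝓝 0)) :
    Tendsto (fun j => ⨍ z in ball x (s j), v z ∂μ) atTop (𝓝 (v x)) := by
  refine Metric.nhds_basis_closedBall.tendsto_right_iff.2 fun ε hε => ?_
  obtain ⟨η, hη, hball⟩ := Metric.continuousAt_iff.1 hx ε hε
  filter_upwards [hs.eventually (gt_mem_nhds hη)] with j hj
  refine (convex_closedBall _ _).set_average_mem isClosed_closedBall (hμ x _ (hs₀ j)).ne'
    (measure_ne_top _ _) ?_ hv.integrableOn
  filter_upwards [ae_restrict_mem measurableSet_ball] with z hz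
  exact (hball ((mem_ball.1 hz).trans hj)).le

lemma SupportsPoincare.abs_average_sub_le (hP : SupportsPoincare μ CP lP) (hd : IsDoubling μ Cμ)
    [IsFiniteMeasure μ] (hC : Cμ ≠ ⊤) {v : T → ℝ} (hv : Integrable v μ)
    (hug : IsUpperGradient v fun _ => 1) {x : T} (hx : ContinuousAt v x) {r : ℝ} (hr : 0 < r)
    (hr' : r < diam (univ : Set T)) :
    |(⨍ z in ball x r, v z ∂μ) - v x| ≤ 4 * Cμ.toReal * |CP| * r := by
  have hlim := tendsto_average_ball (μ := μ) (fun x r hr => (hP.1 x r hr).1) hv hx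
    (s := fun j => r / 2 ^ j) (fun j => by positivity)
    (tendsto_const_nhds.div_atTop (tendsto_pow_atTop_atTop_of_one_lt one_lt_two))
  have h := dist_le_of_le_geometric_two_of_tendsto₀ (C := 4 * Cμ.toReal * |CP| * r)
    (f := fun j : ℕ => ⨍ z in ball x (r / 2 ^ j), v z ∂μ) (fun j => ?_) hlim
  · simpa [Real.dist_eq] using h
  have hle : r / 2 ^ (j + 1) ≤ r / 2 ^ j := by
    gcongr
    · exact one_le_two
    · exact Nat.le_succ j
  have hdbl := (hd x (r / 2 ^ (j + 1)) (by positivity)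
    ((div_le_self hr.le (one_le_pow₀ one_le_two)).trans_lt hr')).2.1
  rw [show 2 * (r / 2 ^ (j + 1)) = r / 2 ^ j by field_simp; ring] at hdbl
  rw [dist_comm, Real.dist_eq]
  refine (hP.abs_average_sub_average_le hv hug (by positivity) (by positivity)
    (ball_subset_ball hle) (D := Cμ.toReal) ENNReal.toReal_nonneg
    (by rwa [ENNReal.ofReal_toReal hC])).trans (le_of_eq ?_)
  ring

/-- A function with upper gradient `1` is Lipschitz at small scales between its points of
continuity. -/
lemma SupportsPoincare.abs_sub_le (hP : SupportsPoincare μ CP lP) (hd : IsDoubling μ Cμ)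
    [IsFiniteMeasure μ] (hC : Cμ ≠ ⊤) {v : T → ℝ} (hv : Integrable v μ)
    (hug : IsUpperGradient v fun _ => 1) {x y : T} (hx : ContinuousAt v x)
    (hy : ContinuousAt v y) {r : ℝ} (hxy : dist x y ≤ r) (hr : 0 < r)
    (hr' : 2 * r < diam (univ : Set T)) :
    |v x - v y| ≤ (12 * Cμ.toReal + 4 * Cμ.toReal ^ 2) * |CP| * r := by
  have h₁ := hP.abs_average_sub_le hd hC hv hug hx (r := 2 * r) (by positivity) hr'
  have h₂ := hP.abs_average_sub_le hd hC hv hug hy hr (by linarith)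
  have h₃ := hP.abs_average_sub_average_le hv hug (x := x) (y := y) (r := 2 * r) (s := r)
    (D := Cμ.toReal ^ 2) (by positivity) hr
    (ball_subset_ball' (by rw [dist_comm]; linarith)) (by positivity) (by
      rw [ENNReal.ofReal_pow ENNReal.toReal_nonneg, ENNReal.ofReal_toReal hC]
      calc μ (ball x (2 * r)) ≤ μ (ball y (2 * (2 * r))) :=
            measure_mono (ball_subset_ball' (by linarith))
        _ ≤ Cμ * μ (ball y (2 * r)) := (hd y _ (by positivity) hr').2.1
        _ ≤ Cμ * (Cμ * μ (ball y r)) := by gcongr; exact (hd y r hr (by linarith)).2.1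
        _ = _ := by ring)
  rw [abs_le] at h₁ h₂ h₃ ⊢
  constructor <;> nlinarith [h₁.1, h₁.2, h₂.1, h₂.2, h₃.1, h₃.2]

end Lipschitz

end Duality

namespace Duality

/-! ### Slabs of the lifted map -/

lemma exists_eq_or_eq_of_notMem_Ioo {f : ℝ → ℝ} {a b α β : ℝ} (hab : a ≤ b)
    (hf : ContinuousOn f (Icc a b)) (ha : f a ∈ Ioo α β) (hb : f b ∉ Ioo α β) :
    ∃ t ∈ Icc a b, f t = α ∨ f t = β := by
  by_cases h : f b ≤ α
  · obtain ⟨t, ht, hft⟩ := intermediate_value_Icc' hab hf ⟨h, ha.1.le⟩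
    exact ⟨t, ht, Or.inl hft⟩
  · have hβ : β ≤ f b := not_lt.1 fun h' => hb ⟨not_le.1 h, h'⟩
    obtain ⟨t, ht, hft⟩ := intermediate_value_Icc hab hf ⟨ha.2.le, hβ⟩
    exact ⟨t, ht, Or.inr hft⟩

/-- A path segment of a continuous function between two levels. -/
lemma exists_segment_between {f : ℝ → ℝ} {a b c d : ℝ} (hab : a ≤ b) (hcd : c ≤ d)
    (hf : Continuous f) (ha : f a = c) (hb : f b = d) :
    ∃ s e, a ≤ s ∧ s ≤ e ∧ e ≤ b ∧ f s = c ∧ f e = d ∧ ∀ t ∈ Icc s e, f t ∈ Icc c d := by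
  obtain ⟨e, he, hmin⟩ := (isCompact_Icc.inter_right (isClosed_singleton.preimage hf) :
    IsCompact (Icc a b ∩ f ⁻¹' {d})).exists_isLeast ⟨b, right_mem_Icc.2 hab, hb⟩
  obtain ⟨s, hs, hmax⟩ := (isCompact_Icc.inter_right (isClosed_singleton.preimage hf) :
    IsCompact (Icc a e ∩ f ⁻¹' {c})).exists_isGreatest ⟨a, left_mem_Icc.2 he.1.1, ha⟩
  refine ⟨s, e, hs.1.1, hs.1.2, he.1.2, hs.2, he.2, fun t ht => ⟨?_, ?_⟩⟩
  · by_contra! h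
    obtain ⟨u, hu, hfu⟩ := intermediate_value_Icc ht.2 hf.continuousOn
      (⟨h.le, by rw [show f e = d from he.2]; exact hcd⟩ : c ∈ Icc (f t) (f e))
    have := hmax ⟨⟨hs.1.1.trans (ht.1.trans hu.1), hu.2⟩, hfu⟩
    have hts : t = s := le_antisymm (hu.1.trans this) ht.1
    rw [hts, show f s = c from hs.2] at h
    exact lt_irrefl _ h
  · by_contra! h
    obtain ⟨u, hu, hfu⟩ := intermediate_value_Icc ht.1 hf.continuousOn
      (⟨by rw [show f s = c from hs.2]; exact hcd, h.le⟩ : d ∈ Icc (f s) (f t))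
    have := hmin ⟨⟨hs.1.1.trans hu.1, hu.2.trans (ht.2.trans he.1.2)⟩, hfu⟩
    have hte : t = e := le_antisymm ht.2 (this.trans hu.2)
    rw [hte, show f e = d from he.2] at h
    exact lt_irrefl _ h

section Lift

variable {T Tt : Type*} {π : Tt → T} {φ : T → UnitAddCircle} {φt : Tt → ℝ}

lemma exists_sub_eq_intCast (hlift : ∀ x, ((φt x : ℝ) : UnitAddCircle) = φ (π x)) {x y : Tt}
    (h : π x = π y) : ∃ m : ℤ, φt x - φt y = m := by
  have h₀ : ((φt x - φt y : ℝ) : UnitAddCircle) = 0 := by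
    rw [AddCircle.coe_sub, hlift, hlift, h, sub_self]
  obtain ⟨m, hm⟩ := (AddCircle.coe_eq_zero_iff _).1 h₀
  exact ⟨m, by simpa using hm.symm⟩

lemma eq_of_proj_eq (hlift : ∀ x, ((φt x : ℝ) : UnitAddCircle) = φ (π x)) {x y : Tt}
    (h : π x = π y) (hlt : |φt x - φt y| < 1) : φt x = φt y := by
  obtain ⟨m, hm⟩ := exists_sub_eq_intCast hlift h
  rw [hm] at hlt
  have : m = 0 := Int.abs_lt_one_iff.1 (by exact_mod_cast hlt)
  rw [this] at hm
  push_cast at hm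
  linarith

lemma disjoint_slabs (hlift : ∀ x, ((φt x : ℝ) : UnitAddCircle) = φ (π x)) {s t : Set ℝ}
    (hst : Disjoint s t) (hlt : ∀ a ∈ s, ∀ b ∈ t, |a - b| < 1) :
    Disjoint (π '' (φt ⁻¹' s)) (π '' (φt ⁻¹' t)) := by
  refine disjoint_left.2 ?_
  rintro _ ⟨x, hx, rfl⟩ ⟨y, hy, hxy⟩
  have h := eq_of_proj_eq hlift hxy.symm (hlt _ hx _ hy)
  refine disjoint_left.1 hst hx ?_
  rw [h]
  exact hy

end Lift

section Cover

variable {T Tt : Type*} [MetricSpace T] [MetricSpace Tt] {π : Tt → T} {φt : Tt → ℝ}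

lemma exists_lift (hπ : IsCoveringMap π) (γ : UPath T) {x : Tt} (hx : π x = γ.start) :
    ∃ g : ℝ → Tt, Continuous g ∧ g γ.a = x ∧ ∀ t ∈ Icc γ.a γ.b, π (g t) = γ.toFun t := by
  obtain ⟨Γ, hΓ, hΓ₀⟩ := hπ.exists_path_lifts γ.toPath.toContinuousMap x (by simp [hx])
  refine ⟨fun t => Γ (projIcc 0 1 zero_le_one ((t - γ.a) / (γ.b - γ.a))), ?_, ?_, fun t ht => ?_⟩
  · exact Γ.continuous.comp (continuous_projIcc.comp (by fun_prop))
  · simp only [sub_self, zero_div]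
    rw [projIcc_left]
    exact hΓ₀
  · have hmem : (t - γ.a) / (γ.b - γ.a) ∈ Icc (0 : ℝ) 1 :=
      ⟨div_nonneg (by linarith [ht.1]) (by linarith [γ.hab]),
        div_le_one_of_le₀ (by linarith [ht.2]) (by linarith [γ.hab])⟩
    have h := congrFun hΓ (projIcc 0 1 zero_le_one ((t - γ.a) / (γ.b - γ.a)))
    simp only [Function.comp_apply] at h
    rw [h, projIcc_of_mem zero_le_one hmem]
    change γ.toFun (γ.a + (t - γ.a) / (γ.b - γ.a) * (γ.b - γ.a)) = γ.toFun t
    rcases eq_or_ne (γ.b - γ.a) 0 with h₀ | h₀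
    · have : t = γ.a := le_antisymm (by linarith [ht.2]) ht.1
      simp [this]
    · rw [div_mul_cancel₀ _ h₀, add_sub_cancel]

/-- A path leaving an open slab crosses one of its two boundary levels. -/
lemma exists_mem_level_of_leave (hπ : IsCoveringMap π) (hφt : Continuous φt) {α β : ℝ}
    (γ : UPath T) (hs : γ.start ∈ π '' (φt ⁻¹' Ioo α β)) (hf : γ.finish ∉ π '' (φt ⁻¹' Ioo α β)) :
    ∃ t ∈ Icc γ.a γ.b, γ.toFun t ∈ π '' (φt ⁻¹' ({α, β} : Set ℝ)) := by
  obtain ⟨x, hx, hxs⟩ := hs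
  obtain ⟨g, hg, hga, hgπ⟩ := exists_lift hπ γ hxs
  have hb : φt (g γ.b) ∉ Ioo α β := fun h => hf ⟨_, h, hgπ _ γ.right_mem⟩
  obtain ⟨t, ht, h⟩ := exists_eq_or_eq_of_notMem_Ioo (f := fun t => φt (g t)) γ.hab
    (hφt.comp hg).continuousOn (by rw [hga]; exact hx) hb
  exact ⟨t, ht, g t, h, hgπ t ht⟩

lemma isOpen_slab (hπ : IsCoveringMap π) (hφt : Continuous φt) (α β : ℝ) :
    IsOpen (π '' (φt ⁻¹' Ioo α β)) :=
  hπ.isOpenMap _ (isOpen_Ioo.preimage hφt)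

/-- A path from the level `-1/8` to the level `1/8` inside the slab of half-width `1/4` has a
segment inside the closed slab of half-width `1/8` joining the same levels. -/
lemma exists_central_segment {φ : T → UnitAddCircle} (hπ : IsCoveringMap π) (hφt : Continuous φt)
    (hlift : ∀ x, ((φt x : ℝ) : UnitAddCircle) = φ (π x)) (γ : UPath T)
    (hs : γ.start ∈ π '' (φt ⁻¹' ({-(1/8)} : Set ℝ)))
    (hf : γ.finish ∈ π '' (φt ⁻¹' ({1/8} : Set ℝ)))
    (hin : γ.InSet (π '' (φt ⁻¹' Ioo (-(1/4) : ℝ) (1/4)))) :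
    ∃ s e, s ≤ e ∧ Icc s e ⊆ Icc γ.a γ.b ∧
      γ.toFun s ∈ π '' (φt ⁻¹' ({-(1/8)} : Set ℝ)) ∧ γ.toFun e ∈ π '' (φt ⁻¹' ({1/8} : Set ℝ)) ∧
      (∃ t, γ.toFun t ∈ π '' (φt ⁻¹' ({0} : Set ℝ))) ∧
      ∀ t ∈ Icc s e, γ.toFun t ∈ π '' (φt ⁻¹' Icc (-(1/8)) (1/8)) := by
  obtain ⟨p, hp, hps⟩ := hs
  obtain ⟨g, hg, hga, hgπ⟩ := exists_lift hπ γ hps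
  have hga' : φt (g γ.a) = -(1/8) := by rw [hga]; exact hp
  have hcont : Continuous fun t => φt (g t) := hφt.comp hg
  have hb : φt (g γ.b) ∈ Ioo (-(1/4) : ℝ) (1/4) := by
    by_contra hb
    obtain ⟨t, ht, h⟩ := exists_eq_or_eq_of_notMem_Ioo (f := fun t => φt (g t)) γ.hab
      hcont.continuousOn (by rw [hga']; norm_num) hb
    obtain ⟨q, hq, hqt⟩ := hin t ht
    have h₁ := eq_of_proj_eq hlift (hqt.trans (hgπ t ht).symm) (by
      rcases h with h | h <;> rw [h] <;>
        exact abs_lt.2 ⟨by linarith [hq.1, hq.2], by linarith [hq.1, hq.2]⟩)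
    rcases h with h | h
    · linarith [hq.1]
    · linarith [hq.2]
  have hgb : φt (g γ.b) = 1/8 := by
    obtain ⟨q, hq, hqb⟩ := hf
    have hq' : φt q = 1/8 := hq
    rw [← hq']
    refine eq_of_proj_eq hlift ((hgπ _ γ.right_mem).trans hqb.symm) ?_
    rw [hq']
    exact abs_lt.2 ⟨by linarith [hb.1, hb.2], by linarith [hb.1, hb.2]⟩
  obtain ⟨s, e, has, hse, heb, hs, he, hst⟩ := exists_segment_between
    (f := fun t => φt (g t)) γ.hab (by norm_num) hcont hga' hgb
  obtain ⟨t₀, ht₀, h₀⟩ := intermediate_value_Icc γ.hab hcont.continuousOn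
    (by rw [hga', hgb]; norm_num : (0 : ℝ) ∈ Icc (φt (g γ.a)) (φt (g γ.b)))
  have hsub : Icc s e ⊆ Icc γ.a γ.b := Icc_subset_Icc has heb
  exact ⟨s, e, hse, hsub, ⟨g s, hs, hgπ s (hsub (left_mem_Icc.2 hse))⟩,
    ⟨g e, he, hgπ e (hsub (right_mem_Icc.2 hse))⟩, ⟨t₀, g t₀, h₀, hgπ t₀ ht₀⟩,
    fun t ht => ⟨g t, hst t ht, hgπ t (hsub ht)⟩⟩

open scoped Classical in
/-- Minus the distance to `S` off `K`, extended by zero to `K`. -/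
def outerDist (K S : Set T) (y : T) : ℝ := if y ∈ K then 0 else -infDist y S

lemma isUpperGradient_outerDist {K S : Set T}
    (h : ∀ γ : UPath T, γ.start ∈ K → γ.finish ∉ K → ∃ t ∈ Icc γ.a γ.b, γ.toFun t ∈ S) :
    IsUpperGradient (outerDist K S) fun _ => 1 := by
  refine isUpperGradient_of_sub_le fun γ => ?_
  have hint : γ.integral (fun _ => 1) = ENNReal.ofReal (γ.b - γ.a) := by
    simp [UPath.integral]
  rw [hint]
  refine ENNReal.ofReal_le_ofReal ?_
  have hab := γ.hab
  by_cases hs : γ.start ∈ K <;> by_cases hf : γ.finish ∈ K <;>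
    simp only [outerDist, hs, hf, if_true, if_false]
  · linarith
  · obtain ⟨t, ht, htS⟩ := h γ hs hf
    have h₁ := γ.dist_le γ.right_mem ht
    rw [abs_of_nonneg (by linarith [ht.2])] at h₁
    have h₂ : infDist γ.finish S ≤ dist γ.finish (γ.toFun t) := infDist_le_dist_of_mem htS
    have h₃ : dist γ.finish (γ.toFun t) ≤ γ.b - t := h₁
    linarith [ht.1]
  · have : 0 ≤ infDist γ.start S := infDist_nonneg
    linarith
  · have h₁ := infDist_le_infDist_add_dist (s := S) (x := γ.finish) (y := γ.start)
    have h₂ : dist γ.finish γ.start ≤ |γ.b - γ.a| := γ.dist_le γ.right_mem γ.left_mem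
    rw [abs_of_nonneg (by linarith)] at h₂
    linarith

lemma continuousAt_outerDist_of_mem {K S U : Set T} (hU : IsOpen U) (hUK : U ⊆ K) {x : T}
    (hx : x ∈ U) : ContinuousAt (outerDist K S) x :=
  continuousAt_const.congr (f := fun _ => (0 : ℝ)) (by
    filter_upwards [hU.mem_nhds hx] with y hy
    simp [outerDist, hUK hy])

lemma continuousAt_outerDist_of_disjoint {K S U : Set T} (hU : IsOpen U) (hUK : Disjoint U K)
    {x : T} (hx : x ∈ U) : ContinuousAt (outerDist K S) x :=
  (continuous_infDist_pt S).neg.continuousAt.congr (by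
    filter_upwards [hU.mem_nhds hx] with y hy
    simp [outerDist, disjoint_left.1 hUK hy])

end Cover

end Duality

namespace Duality

/-! ### The codimension 1 content of the zero level along a crossing path -/

lemma exists_half_pow_le (l : ℝ) : ∃ m : ℕ, 0 < l → (1 / 2 : ℝ) ^ m ≤ l := by
  by_cases hl : 0 < l
  · obtain ⟨m, hm⟩ := exists_pow_lt_of_lt_one hl (by norm_num : (1 / 2 : ℝ) < 1)
    exact ⟨m, fun _ => hm.le⟩
  · exact ⟨0, fun h => absurd h hl⟩

section Crossing

variable {T Tt : Type*} [MetricSpace T] [MeasurableSpace T] {μ : Measure T} {Cμ : ℝ≥0∞}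
  {CP lP : ℝ}

lemma codimH_mono {A B : Set T} (h : A ⊆ B) : codimH μ A ≤ codimH μ B :=
  iSup₂_mono fun _ _ => iInf_mono fun _ => iInf_mono fun _ => iInf_mono fun _ =>
    iInf_mono' fun hB => ⟨h.trans hB, le_rfl⟩

lemma codimH_empty [Nonempty T] : codimH μ (∅ : Set T) = 0 := by
  refine le_antisymm (iSup₂_le fun δ hδ => ?_) zero_le
  refine iInf_le_of_le (fun _ => Classical.arbitrary T) (iInf_le_of_le (fun _ => 0) ?_)
  simp [hδ.le]

/-- If the measure of `A` in balls of radius `r` centred on a path is never balanced, it cannot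
change from null to full along the path. -/
lemma IsDoubling.false_of_unbalanced (hd : IsDoubling μ Cμ) {γ : UPath T} {s e r : ℝ}
    (hse : s ≤ e) (hsub : Icc s e ⊆ Icc γ.a γ.b) (hr : 0 < r) (hr' : r < diam (univ : Set T))
    (hμ : ∀ (x : T) (r : ℝ), 0 < r → 0 < μ (ball x r) ∧ μ (ball x r) < ⊤)
    {A : Set T} {η : ℝ≥0∞} (hη : η < 1) (hηC : η * (Cμ + Cμ ^ 2) < 1)
    (hmin : ∀ t ∈ Icc s e, min (μ (ball (γ.toFun t) r ∩ A)) (μ (ball (γ.toFun t) r \ A)) ≤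
      η * μ (ball (γ.toFun t) r))
    (hs : μ (ball (γ.toFun s) r ∩ A) = 0) (he : μ (ball (γ.toFun e) r \ A) = 0) : False := by
  set Q : ℝ → Prop := fun t => μ (ball (γ.toFun t) r ∩ A) ≤ η * μ (ball (γ.toFun t) r)
  have step : ∀ t ∈ Icc s e, ∀ u ∈ Icc s e, dist u t < r / 2 → Q t → Q u := by
    intro t ht u hu htu hQ
    by_contra hQu
    have hu' : μ (ball (γ.toFun u) r \ A) ≤ η * μ (ball (γ.toFun u) r) :=
      (min_le_iff.1 (hmin u hu)).resolve_left hQu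
    have hdist : dist (γ.toFun u) (γ.toFun t) < r / 2 :=
      (γ.dist_le (hsub hu) (hsub ht)).trans_lt htu
    have hhalf := hμ (γ.toFun t) (r / 2) (by positivity)
    have h₁ : μ (ball (γ.toFun t) r) ≤ Cμ * μ (ball (γ.toFun t) (r / 2)) := by
      simpa using hd.measure_ball_le_pow hr hr' 1 (x := γ.toFun t)
    have h₂ : μ (ball (γ.toFun u) r) ≤ Cμ ^ 2 * μ (ball (γ.toFun t) (r / 2)) :=
      calc _ ≤ μ (ball (γ.toFun t) (2 * r)) := measure_mono (ball_subset_ball' (by linarith))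
        _ ≤ Cμ * μ (ball (γ.toFun t) r) := (hd _ r hr hr').2.1
        _ ≤ Cμ * (Cμ * μ (ball (γ.toFun t) (r / 2))) := by gcongr
        _ = _ := by ring
    have hcov : ball (γ.toFun t) (r / 2) ⊆ ball (γ.toFun t) r ∩ A ∪ ball (γ.toFun u) r \ A := by
      intro z hz
      by_cases hzA : z ∈ A
      · exact Or.inl ⟨ball_subset_ball (by linarith) hz, hzA⟩
      · exact Or.inr ⟨ball_subset_ball' (by rw [dist_comm]; linarith) hz, hzA⟩
    have : μ (ball (γ.toFun t) (r / 2)) < μ (ball (γ.toFun t) (r / 2)) :=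
      calc _ ≤ μ (ball (γ.toFun t) r ∩ A) + μ (ball (γ.toFun u) r \ A) :=
            (measure_mono hcov).trans (measure_union_le _ _)
        _ ≤ η * (Cμ * μ (ball (γ.toFun t) (r / 2))) +
              η * (Cμ ^ 2 * μ (ball (γ.toFun t) (r / 2))) :=
            add_le_add (hQ.trans (by gcongr)) (hu'.trans (by gcongr))
        _ = η * (Cμ + Cμ ^ 2) * μ (ball (γ.toFun t) (r / 2)) := by ring
        _ < 1 * μ (ball (γ.toFun t) (r / 2)) :=
            ENNReal.mul_lt_mul_left hhalf.1.ne' hhalf.2.ne hηC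
        _ = _ := one_mul _
    exact lt_irrefl _ this
  have hiff : Q s ↔ Q e := by
    refine isPreconnected_Icc.induction₂ (fun t u => Q t ↔ Q u) (fun t ht => ?_)
      (fun _ _ _ _ _ _ => Iff.trans) (fun _ _ _ _ => Iff.symm)
      (left_mem_Icc.2 hse) (right_mem_Icc.2 hse)
    filter_upwards [self_mem_nhdsWithin,
      mem_nhdsWithin_of_mem_nhds (ball_mem_nhds t (half_pos hr))] with u hu hut
    exact ⟨step t ht u hu hut, step u hu t ht (by rw [dist_comm]; exact hut)⟩
  have hQe : Q e := hiff.1 (by simp only [Q, hs]; exact zero_le)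
  have hpos := hμ (γ.toFun e) r hr
  have : μ (ball (γ.toFun e) r) < μ (ball (γ.toFun e) r) :=
    calc _ ≤ μ (ball (γ.toFun e) r ∩ A) + μ (ball (γ.toFun e) r \ A) := measure_le_inter_add_sdiff _ _ _
      _ ≤ η * μ (ball (γ.toFun e) r) := by rw [he, add_zero]; exact hQe
      _ < 1 * μ (ball (γ.toFun e) r) := ENNReal.mul_lt_mul_left hpos.1.ne' hpos.2.ne hη
      _ = _ := one_mul _
  exact lt_irrefl _ this

variable [BorelSpace T] [CompactSpace T]

/-- Where nothing separates `A` from its complement, one of the two is null. -/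
lemma SupportsPoincare.min_measure_eq_zero (hP : SupportsPoincare μ CP lP)
    (hd : IsDoubling μ Cμ) (hC : Cμ ≠ ⊤) {Λ : ℝ} (hΛ₀ : 0 < Λ) (hΛ : lP ≤ Λ) {A S : Set T}
    (hA : MeasurableSet A) {x : T} {r : ℝ} (hr : 0 < r) (hr' : r < diam (univ : Set T))
    (hsep : ∀ γ : UPath T, γ.InSet (ball x (2 * (Λ * r))) → γ.start ∈ A → γ.finish ∉ A →
      ∃ t ∈ Icc γ.a γ.b, γ.toFun t ∈ S)
    (hS : S ∩ ball x (2 * (Λ * r)) = ∅) :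
    min (μ (ball x r ∩ A)) (μ (ball x r \ A)) = 0 := by
  have : Nonempty T := ⟨x⟩
  obtain ⟨m, hm⟩ := exists_half_pow_le lP
  by_contra h0
  have hfin : (ENNReal.ofReal (2 * |CP|) * Cμ ^ (m + 1) + Cμ) * ENNReal.ofReal r ≠ ⊤ := by
    finiteness
  obtain ⟨h, hh, hlt⟩ := ENNReal.exists_nnreal_pos_mul_lt hfin h0
  refine absurd (hP.min_measure_le hd hΛ₀ hΛ hm hA hr hr' hsep (h := h) ?_) (not_le.2 ?_)
  · rw [hS, codimH_empty]; exact_mod_cast hh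
  · rwa [mul_comm]

variable [MetricSpace Tt] {π : Tt → T} {φ : T → UnitAddCircle} {φt : Tt → ℝ}

/-- The central slab stays away from the levels `±1/4` at a scale controlled by `δ`. -/
lemma SupportsPoincare.lt_dist_of_mem_slab (hP : SupportsPoincare μ CP lP)
    (hd : IsDoubling μ Cμ) (hC : Cμ ≠ ⊤) (hπ : IsCoveringMap π) (hφt : Continuous φt)
    (hlift : ∀ x, ((φt x : ℝ) : UnitAddCircle) = φ (π x)) {δ : ℝ}
    (hδ : ∀ x ∈ π '' (φt ⁻¹' ({-(1/4), 1/4} : Set ℝ)),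
      ∀ y ∈ π '' (φt ⁻¹' ({-(1/8), 1/8} : Set ℝ)), δ ≤ dist x y)
    (hne : (π '' (φt ⁻¹' ({-(1/8), 1/8} : Set ℝ))).Nonempty)
    {r : ℝ} (hr : 0 < r) (hr' : 2 * r < diam (univ : Set T)) (hrδ : r < δ)
    (hKr : (12 * Cμ.toReal + 4 * Cμ.toReal ^ 2) * |CP| * r < δ) {x y : T}
    (hx : x ∈ π '' (φt ⁻¹' Icc (-(1/8)) (1/8)))
    (hy : y ∈ π '' (φt ⁻¹' ({-(1/4), 1/4} : Set ℝ))) : r < dist x y := by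
  have : Nonempty T := ⟨x⟩
  have := hP.isFiniteMeasure
  obtain ⟨p, hp, rfl⟩ := hx
  by_cases hp' : φt p ∈ Ioo (-(1/8) : ℝ) (1/8)
  swap
  · have hmem : φt p ∈ ({-(1/8), 1/8} : Set ℝ) := by
      by_contra h
      simp only [mem_insert_iff, mem_singleton_iff, not_or] at h
      exact hp' ⟨lt_of_le_of_ne hp.1 (Ne.symm h.1), lt_of_le_of_ne hp.2 h.2⟩
    have := hδ _ hy _ ⟨p, hmem, rfl⟩
    rw [dist_comm] at this
    linarith
  set K := π '' (φt ⁻¹' Ioo (-(1/8)) (1/8))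
  set S := π '' (φt ⁻¹' ({-(1/8), 1/8} : Set ℝ))
  have hK : IsOpen K := isOpen_slab hπ hφt _ _
  have hxK : π p ∈ K := ⟨p, hp', rfl⟩
  obtain ⟨U, hU, hUK, hyU⟩ : ∃ U : Set T, IsOpen U ∧ Disjoint U K ∧ y ∈ U := by
    obtain ⟨q, hq, rfl⟩ := hy
    rcases hq with hq | hq
    · refine ⟨π '' (φt ⁻¹' Ioo (-(3/8)) (-(1/8))), isOpen_slab hπ hφt _ _,
        disjoint_slabs hlift ?_ ?_, q, ?_, rfl⟩
      · exact disjoint_left.2 fun a ha ha' => by linarith [ha.2, ha'.1]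
      · exact fun a ha b hb => abs_lt.2 ⟨by linarith [ha.1, hb.2], by linarith [ha.2, hb.1]⟩
      · rw [mem_preimage, hq]; norm_num
    · refine ⟨π '' (φt ⁻¹' Ioo (1/8) (3/8)), isOpen_slab hπ hφt _ _,
        disjoint_slabs hlift ?_ ?_, q, ?_, rfl⟩
      · exact disjoint_left.2 fun a ha ha' => by linarith [ha.1, ha'.2]
      · exact fun a ha b hb => abs_lt.2 ⟨by linarith [ha.1, hb.2], by linarith [ha.2, hb.1]⟩
      · rw [mem_preimage, hq]; norm_num
  by_contra! hxy
  have hbdd : ∀ z, ‖outerDist K S z‖ ≤ diam (univ : Set T) := by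
    intro z
    obtain ⟨w, hw⟩ := hne
    unfold outerDist
    split_ifs
    · simpa using diam_nonneg
    · rw [norm_neg, Real.norm_of_nonneg infDist_nonneg]
      exact (infDist_le_dist_of_mem hw).trans
        (dist_le_diam_of_mem isCompact_univ.isBounded (mem_univ _) (mem_univ _))
  have hmeas : Measurable (outerDist K S) :=
    Measurable.ite hK.measurableSet measurable_const measurable_infDist.neg
  have h := hP.abs_sub_le hd hC (Integrable.of_bound hmeas.aestronglyMeasurable _
      (Eventually.of_forall hbdd))
    (isUpperGradient_outerDist fun γ => exists_mem_level_of_leave hπ hφt γ)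
    (continuousAt_outerDist_of_mem hK Subset.rfl hxK)
    (continuousAt_outerDist_of_disjoint hU hUK hyU) hxy hr hr'
  have hyK : y ∉ K := disjoint_left.1 hUK hyU
  simp only [outerDist, hxK, hyK, if_true, if_false, zero_sub, neg_neg] at h
  have h' : δ ≤ infDist y S := (le_infDist hne).2 fun {z} hz => hδ y hy z hz
  linarith [le_abs_self (infDist y S)]

end Crossing

end Duality
namespace Duality

/-! ### A ball on the path where the zero level is large -/

section Main

variable {T Tt : Type*} [MetricSpace T] [MeasurableSpace T] [BorelSpace T] [CompactSpace T]
  [MetricSpace Tt] {μ : Measure T} {Cμ : ℝ≥0∞} {CP lP : ℝ} {π : Tt → T}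
  {φ : T → UnitAddCircle} {φt : Tt → ℝ}

/-- Along a path crossing the slab, the zero level has substantial codimension 1 measure in some
ball centred on the path. -/
lemma SupportsPoincare.exists_le_codimH (hP : SupportsPoincare μ CP lP) (hd : IsDoubling μ Cμ)
    (hπ : IsCoveringMap π) (hφt : Continuous φt)
    (hlift : ∀ x, ((φt x : ℝ) : UnitAddCircle) = φ (π x)) {δ : ℝ}
    (hδ₁ : ∀ x ∈ π '' (φt ⁻¹' ({-(1/8), 1/8} : Set ℝ)),
      ∀ y ∈ π '' (φt ⁻¹' ({0} : Set ℝ)), δ ≤ dist x y)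
    (hδ₂ : ∀ x ∈ π '' (φt ⁻¹' ({-(1/4), 1/4} : Set ℝ)),
      ∀ y ∈ π '' (φt ⁻¹' ({-(1/8), 1/8} : Set ℝ)), δ ≤ dist x y)
    {Λ : ℝ} (hΛ₀ : 0 < Λ) (hΛ : lP ≤ Λ) {m M : ℕ} (hm : 0 < lP → (1 / 2 : ℝ) ^ m ≤ lP)
    (hM : 2 * Λ * ((12 * Cμ.toReal + 4 * Cμ.toReal ^ 2) * |CP| + 2) < 2 ^ M)
    {η C : ℝ≥0∞} (hη : η < 1) (hηC : η * (Cμ + Cμ ^ 2) < 1)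
    (hC : C * ((ENNReal.ofReal (2 * |CP|) * Cμ ^ (m + 1) + Cμ) * Cμ ^ M) ≤ η)
    {R : ℝ} (hR : 0 < R) (hRδ : R < δ) (γ : UPath T)
    (hs : γ.start ∈ π '' (φt ⁻¹' ({-(1/8)} : Set ℝ)))
    (hf : γ.finish ∈ π '' (φt ⁻¹' ({1/8} : Set ℝ)))
    (hin : γ.InSet (π '' (φt ⁻¹' Ioo (-(1/4) : ℝ) (1/4)))) :
    ∃ t ∈ Icc γ.a γ.b, C * (ENNReal.ofReal R)⁻¹ * μ (ball (γ.toFun t) R) ≤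
      codimH μ (π '' (φt ⁻¹' ({0} : Set ℝ)) ∩ ball (γ.toFun t) R) := by
  obtain ⟨s, e, hse, hsub, hsm, hem, ⟨t₀, ht₀⟩, hcen⟩ :=
    exists_central_segment hπ hφt hlift γ hs hf hin
  have hsub8 : π '' (φt ⁻¹' ({-(1/8)} : Set ℝ)) ⊆ π '' (φt ⁻¹' ({-(1/8), 1/8} : Set ℝ)) :=
    image_mono (preimage_mono (by simp))
  have hdiam : R < diam (univ : Set T) := hRδ.trans_le ((hδ₁ _ (hsub8 hsm) _ ht₀).trans
    (dist_le_diam_of_mem isCompact_univ.isBounded (mem_univ _) (mem_univ _)))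
  have hCμ : Cμ ≠ ⊤ := hd.ne_top hP γ.start (hR.trans hdiam)
  set K := (12 * Cμ.toReal + 4 * Cμ.toReal ^ 2) * |CP|
  have hK : 0 ≤ K := by positivity
  set r := R / 2 ^ M with hr_def
  have hr : 0 < r := by positivity
  have hrR : r ≤ R := div_le_self hR.le (one_le_pow₀ one_le_two)
  have hRr : R = r * 2 ^ M := by rw [hr_def]; field_simp
  set ρ := 2 * (Λ * r) with hρ_def
  have hρ : 0 < ρ := by positivity
  have hρM : ρ * (K + 2) < R :=
    calc ρ * (K + 2) = r * (2 * Λ * (K + 2)) := by rw [hρ_def]; ring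
      _ < r * 2 ^ M := by gcongr
      _ = R := hRr.symm
  have hKρ : 0 ≤ K * ρ := by positivity
  have hρR : ρ ≤ R := by linarith
  set S := π '' (φt ⁻¹' ({0} : Set ℝ))
  set A := π '' (φt ⁻¹' Ioo (0 : ℝ) (1/4))
  have hA : IsOpen A := isOpen_slab hπ hφt _ _
  have hsep : ∀ t ∈ Icc s e, ∀ β : UPath T, β.InSet (ball (γ.toFun t) ρ) → β.start ∈ A →
      β.finish ∉ A → ∃ u ∈ Icc β.a β.b, β.toFun u ∈ S := by
    intro t ht β hβ hβs hβf
    obtain ⟨u, hu, q, hq, hqu⟩ := exists_mem_level_of_leave hπ hφt β hβs hβf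
    refine ⟨u, hu, q, ?_, hqu⟩
    rcases hq with hq | hq
    · exact hq
    · have h := hP.lt_dist_of_mem_slab hd hCμ hπ hφt hlift hδ₂ ⟨_, hsub8 hsm⟩ hρ
        (by linarith) (by linarith) (by linarith : K * ρ < δ) (hcen t ht)
        ⟨q, Or.inr hq, hqu⟩
      have h' := hβ u hu
      rw [mem_ball, dist_comm] at h'
      exact absurd h' h.not_gt
  by_contra! hlt
  have hpos := fun x => hP.1 x r hr
  have hzero : ∀ t ∈ Icc s e, γ.toFun t ∈ π '' (φt ⁻¹' ({-(1/8), 1/8} : Set ℝ)) →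
      min (μ (ball (γ.toFun t) r ∩ A)) (μ (ball (γ.toFun t) r \ A)) = 0 := by
    intro t ht htm
    refine hP.min_measure_eq_zero hd hCμ hΛ₀ hΛ hA.measurableSet hr (hrR.trans_lt hdiam)
      (hsep t ht) (eq_empty_of_forall_notMem ?_)
    rintro y ⟨hyS, hy⟩
    have := hδ₁ _ htm y hyS
    rw [mem_ball, dist_comm] at hy
    linarith
  have hpos_inter : ∀ {U : Set T} {x : T}, IsOpen U → x ∈ U → 0 < μ (ball x r ∩ U) := by
    intro U x hU hx
    obtain ⟨ε, hε, hεU⟩ := Metric.isOpen_iff.1 (isOpen_ball.inter hU) x ⟨mem_ball_self hr, hx⟩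
    exact (hP.1 x ε hε).1.trans_le (measure_mono hεU)
  refine hd.false_of_unbalanced hse hsub hr (hrR.trans_lt hdiam) hP.1 (A := A) hη hηC
    (fun t ht => ?_) ?_ ?_
  · have h := hP.min_measure_le hd hΛ₀ hΛ hm hA.measurableSet hr (hrR.trans_lt hdiam)
      (hsep t ht) ((codimH_mono (inter_subset_inter_right _ (ball_subset_ball hρR))).trans_lt
        (hlt t (hsub ht)))
    refine h.trans ?_
    set κ := ENNReal.ofReal (2 * |CP|) * Cμ ^ (m + 1) + Cμ
    have hone : ENNReal.ofReal r * (ENNReal.ofReal R)⁻¹ ≤ 1 := by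
      rw [← div_eq_mul_inv]
      exact ENNReal.div_le_of_le_mul (by rw [one_mul]; exact ENNReal.ofReal_le_ofReal hrR)
    calc κ * ENNReal.ofReal r * (C * (ENNReal.ofReal R)⁻¹ * μ (ball (γ.toFun t) R))
        = C * κ * (ENNReal.ofReal r * (ENNReal.ofReal R)⁻¹) * μ (ball (γ.toFun t) R) := by ring
      _ ≤ C * κ * 1 * (Cμ ^ M * μ (ball (γ.toFun t) r)) := by
        gcongr
        exact hd.measure_ball_le_pow hR hdiam M
      _ = C * (κ * Cμ ^ M) * μ (ball (γ.toFun t) r) := by ring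
      _ ≤ _ := by gcongr
  · refine (min_eq_bot.1 (hzero s (left_mem_Icc.2 hse) (hsub8 hsm))).resolve_right
      (ne_of_gt ?_)
    have hdisj : Disjoint (π '' (φt ⁻¹' Ioo (-(1/4) : ℝ) 0)) A := by
      refine disjoint_slabs hlift (disjoint_left.2 fun a ha ha' => ?_) fun a ha b hb => ?_
      · exact lt_asymm ha.2 ha'.1
      · exact abs_lt.2 ⟨by linarith [ha.1, hb.2], by linarith [ha.2, hb.1]⟩
    refine (hpos_inter (isOpen_slab hπ hφt (-(1/4)) 0) ?_).trans_le
      (measure_mono fun y hy => ⟨hy.1, disjoint_left.1 hdisj hy.2⟩)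
    exact image_mono (preimage_mono (by norm_num)) hsm
  · refine (min_eq_bot.1 (hzero e (right_mem_Icc.2 hse) ?_)).resolve_left
      (ne_of_gt (hpos_inter hA ?_))
    · exact image_mono (preimage_mono (by simp)) hem
    · exact image_mono (preimage_mono (by norm_num)) hem

end Main

end Duality

open Duality in
/-- **Corollary 4.7.** Every path of `Γ` carries a ball of radius `1/n` centered on it
in which the level set `S` has substantial codimension 1 Hausdorff measure. -/
theorem statement14 (Cμ : ℝ≥0∞) (CP lP : ℝ) :
    ∃ C : ℝ≥0∞, 0 < C ∧ C < ⊤ ∧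
      ∀ (T : Type) [MetricSpace T] [MeasurableSpace T] [BorelSpace T] [CompactSpace T]
        (Tt : Type) [MetricSpace Tt]
        (μ : Measure T) (x₀ : T) (α₀ : Path x₀ x₀) (π : Tt → T) (τ : Tt → Tt),
        Standing μ Cμ CP lP x₀ α₀ → CoverSetup π → IsDeck π x₀ α₀ τ →
        ∀ (φ : T → UnitAddCircle) (k : ℤ) (φt : Tt → ℝ),
          0 < k → HasDegree x₀ α₀ φ k → Continuous φt →
          (∀ x, ((φt x : ℝ) : UnitAddCircle) = φ (π x)) →
          ∀ δ : ℝ, 0 < δ →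
            (∀ x ∈ π '' (φt ⁻¹' ({-(1/8), 1/8} : Set ℝ)),
              ∀ y ∈ π '' (φt ⁻¹' ({0} : Set ℝ)), δ ≤ dist x y) →
            (∀ x ∈ π '' (φt ⁻¹' ({-(1/4), 1/4} : Set ℝ)),
              ∀ y ∈ π '' (φt ⁻¹' ({-(1/8), 1/8} : Set ℝ)), δ ≤ dist x y) →
            ∀ n : ℕ, 1 / δ < (n : ℝ) →
              ∀ γ : UPath T, γ.start ∈ π '' (φt ⁻¹' ({-(1/8)} : Set ℝ)) →
                γ.finish ∈ π '' (φt ⁻¹' ({1/8} : Set ℝ)) →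
                γ.InSet (π '' (φt ⁻¹' Set.Ioo (-(1/4) : ℝ) (1/4))) →
                ∃ t ∈ Set.Icc γ.a γ.b,
                  C * (n : ℝ≥0∞) * μ (ball (γ.toFun t) (1 / (n : ℝ))) ≤
                    codimH μ (π '' (φt ⁻¹' ({0} : Set ℝ)) ∩
                      ball (γ.toFun t) (1 / (n : ℝ))) := by
  obtain ⟨m, hm⟩ := exists_half_pow_le lP
  obtain ⟨M, hM⟩ := pow_unbounded_of_one_lt
    (2 * max lP 1 * ((12 * Cμ.toReal + 4 * Cμ.toReal ^ 2) * |CP| + 2)) (one_lt_two (α := ℝ))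
  set D := Cμ.toNNReal with hD
  set η : ℝ≥0 := (D + D ^ 2 + 2)⁻¹
  set κ : ℝ≥0 := ((2 * |CP|).toNNReal * D ^ (m + 1) + D) * D ^ M
  have hη : η < 1 := inv_lt_one_of_one_lt₀ (one_lt_two.trans_le le_add_self)
  have hηD : η * (D + D ^ 2) < 1 := by
    rw [inv_mul_lt_one₀ (by positivity)]
    exact lt_add_of_pos_right _ two_pos
  have hηκ : η / (κ + 1) * κ ≤ η := by
    rw [div_mul_eq_mul_div, div_le_iff₀ (by positivity)]
    gcongr
    exact le_self_add
  refine ⟨(η / (κ + 1) : ℝ≥0), ENNReal.coe_pos.2 (by positivity), ENNReal.coe_lt_top, ?_⟩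
  intro T _ _ _ _ Tt _ μ x₀ α₀ π τ hT hπ _ φ k φt _ _ hφt hlift δ hδ hδ₁ hδ₂ n hn γ hs hf hin
  obtain ⟨hd, hP, -⟩ := hT
  have hn₀ : 0 < (n : ℝ) := (by positivity : 0 < 1 / δ).trans hn
  have hnδ : 1 / (n : ℝ) < δ := (one_div_lt hδ hn₀).1 hn
  have hdiam : 0 < diam (univ : Set T) := by
    obtain ⟨s, e, -, -, hsm, -, ⟨t₀, ht₀⟩, -⟩ :=
      exists_central_segment hπ.1 hφt hlift γ hs hf hin
    exact hδ.trans_le ((hδ₁ _ (image_mono (preimage_mono (by simp)) hsm) _ ht₀).trans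
      (dist_le_diam_of_mem isCompact_univ.isBounded (mem_univ _) (mem_univ _)))
  have hCμ : Cμ = D := (ENNReal.coe_toNNReal (hd.ne_top hP γ.start hdiam)).symm
  have hinv : (ENNReal.ofReal (1 / (n : ℝ)))⁻¹ = n := by
    rw [one_div, ENNReal.ofReal_inv_of_pos hn₀, inv_inv, ENNReal.ofReal_natCast]
  rw [← hinv]
  refine hP.exists_le_codimH hd hπ.1 hφt hlift hδ₁ hδ₂ (lt_max_of_lt_right one_pos)
    (le_max_left _ _) hm hM (η := η) (by exact_mod_cast hη) ?_ ?_ (by positivity) hnδ γ hs hf hin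
  · rw [hCμ]
    exact_mod_cast hηD
  · rw [hCμ, ENNReal.ofReal]
    exact_mod_cast hηκ
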